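/- arXiv:2010.06092 — 5 statements merged into one kernel-verified Lean document; each statement's English description precedes it below -/
import Mathlib

section
/- For every t ≥ 0 the following two identities hold: (i) ∬_{ℝⁿ×ℝⁿ} f(x,ξ,t)|x|² dx dξ = ∬_{ℝⁿ×ℝⁿ} f(x,ξ,0)|x|² dx dξ + 2t·A(0) + t²·E, and (ii) ∬_{ℝⁿ×ℝⁿ} f(x,ξ,t)|x−tξ|² dx dξ = ∬_{ℝⁿ×ℝⁿ} f(x,ξ,0)|x|² dx dξ. -/
/-!
The proof is a computation along characteristics. Free transport `(x, ξ) ↦ (x + t ξ, ξ)` preserves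
Lebesgue measure, so by the mild formulation, for every real `c`,

`∬ f(x,ξ,t) |x - (t-c)ξ|² = ∬ f(x,ξ,0) |x + cξ|² + ∬ ∫₀ᵗ g(x+sξ,ξ,s) |x + cξ|² ds`.

After exchanging the integrals and undoing the transport at each time `s`, the last term becomes
`∫₀ᵗ ∬ g(y,ξ,s) |y + (c-s)ξ|²`. For fixed `y` the weight is a combination of `1`, `ξ` and `|ξ|²`,
so the inner integral vanishes because `g` is a mesoscopic interaction. This is
`weighted_moment_eq`; the choices `c = t` and `c = 0` give the two identities.
-/

open MeasureTheory Real Filter Set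
open scoped RealInnerProductSpace ENNReal

noncomputable section

/-- Free transport over time `s` on phase space: `(x, ξ) ↦ (x + s ξ, ξ)`. -/
def transportEquiv (n : ℕ) (s : ℝ) :
    (EuclideanSpace ℝ (Fin n) × EuclideanSpace ℝ (Fin n)) ≃ᵐ
      (EuclideanSpace ℝ (Fin n) × EuclideanSpace ℝ (Fin n)) where
  toFun p := (p.1 + s • p.2, p.2)
  invFun p := (p.1 - s • p.2, p.2)
  left_inv p := by simp
  right_inv p := by simp
  measurable_toFun := by
    change Measurable fun p : EuclideanSpace ℝ (Fin n) × EuclideanSpace ℝ (Fin n) =>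
      (p.1 + s • p.2, p.2)
    fun_prop
  measurable_invFun := by
    change Measurable fun p : EuclideanSpace ℝ (Fin n) × EuclideanSpace ℝ (Fin n) =>
      (p.1 - s • p.2, p.2)
    fun_prop

theorem measurePreserving_transportEquiv (n : ℕ) (s : ℝ) :
    MeasurePreserving (transportEquiv n s) volume volume := by
  have h : MeasurePreserving
      (fun p : EuclideanSpace ℝ (Fin n) × EuclideanSpace ℝ (Fin n) => (p.1, p.2 + s • p.1))
      (volume.prod volume) (volume.prod volume) := by
    refine (MeasurePreserving.id volume).skew_product
      (g := fun (a b : EuclideanSpace ℝ (Fin n)) => b + s • a) ?_ ?_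
    · fun_prop
    · exact Eventually.of_forall fun a => (measurePreserving_add_right volume (s • a)).map_eq
  exact (Measure.measurePreserving_swap.comp h).comp Measure.measurePreserving_swap

theorem norm_add_smul_sq_le {n : ℕ} (c : ℝ) (x ξ : EuclideanSpace ℝ (Fin n)) :
    ‖x + c • ξ‖ ^ 2 ≤ 2 * (1 + c ^ 2) * (1 + ‖x‖ ^ 2 + ‖ξ‖ ^ 2) := by
  have h1 : ‖x + c • ξ‖ ≤ ‖x‖ + |c| * ‖ξ‖ := by
    simpa [norm_smul] using norm_add_le x (c • ξ)
  have h2 : ‖x + c • ξ‖ ^ 2 ≤ (‖x‖ + |c| * ‖ξ‖) ^ 2 := by gcongr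
  have h3 : |c| ^ 2 = c ^ 2 := sq_abs c
  have h4 : (|c| * ‖ξ‖) ^ 2 = c ^ 2 * ‖ξ‖ ^ 2 := by rw [mul_pow, h3]
  nlinarith [sq_nonneg (‖x‖ - |c| * ‖ξ‖), sq_nonneg c, mul_nonneg (sq_nonneg c) (sq_nonneg ‖x‖),
    sq_nonneg ‖x‖, sq_nonneg ‖ξ‖]

theorem norm_add_smul_sq_eq {n : ℕ} (c : ℝ) (x ξ : EuclideanSpace ℝ (Fin n)) :
    ‖x + c • ξ‖ ^ 2 = ‖x‖ ^ 2 + 2 * c * ⟪x, ξ⟫ + c ^ 2 * ‖ξ‖ ^ 2 := by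
  rw [norm_add_sq_real, inner_smul_right, norm_smul, mul_pow, Real.norm_eq_abs, sq_abs]
  ring

/-- A velocity profile with vanishing mass, momentum and energy is orthogonal to `|x + c ξ|²`. -/
theorem integral_mul_norm_add_smul_sq_eq_zero {n : ℕ} (h : EuclideanSpace ℝ (Fin n) → ℝ)
    (h0 : Integrable h ∧ ∫ ξ, h ξ = 0)
    (h1 : Integrable (fun ξ => h ξ • ξ) ∧ ∫ ξ, h ξ • ξ = (0 : EuclideanSpace ℝ (Fin n)))
    (h2 : Integrable (fun ξ => h ξ * ‖ξ‖ ^ 2) ∧ ∫ ξ, h ξ * ‖ξ‖ ^ 2 = 0)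
    (x : EuclideanSpace ℝ (Fin n)) (c : ℝ) :
    ∫ ξ, h ξ * ‖x + c • ξ‖ ^ 2 = 0 := by
  have hin : Integrable (fun ξ => ⟪x, h ξ • ξ⟫) := h1.1.const_inner x
  have e : ∀ ξ, h ξ * ‖x + c • ξ‖ ^ 2
      = ‖x‖ ^ 2 * h ξ + 2 * c * ⟪x, h ξ • ξ⟫ + c ^ 2 * (h ξ * ‖ξ‖ ^ 2) := by
    intro ξ
    rw [norm_add_smul_sq_eq, inner_smul_right]
    ring
  simp_rw [e]
  rw [integral_add ((h0.1.const_mul _).fun_add (hin.const_mul _)) (h2.1.const_mul _),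
    integral_add (h0.1.const_mul _) (hin.const_mul _), integral_const_mul, integral_const_mul,
    integral_const_mul, integral_inner h1.1, h0.2, h1.2, h2.2]
  simp

/-- The quadratic moment of `f` at time `t` with weight `|x - (t-c)ξ|²` equals the initial moment
with the transported weight `|x + cξ|²`: the interaction does not contribute. -/
theorem weighted_moment_eq {n : ℕ}
    (f g : EuclideanSpace ℝ (Fin n) → EuclideanSpace ℝ (Fin n) → ℝ → ℝ)
    (hf_meas : Measurable fun p : (EuclideanSpace ℝ (Fin n) × EuclideanSpace ℝ (Fin n)) × ℝ =>
      f p.1.1 p.1.2 p.2)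
    (hg_meas : Measurable fun p : (EuclideanSpace ℝ (Fin n) × EuclideanSpace ℝ (Fin n)) × ℝ =>
      g p.1.1 p.1.2 p.2)
    (h_mild : ∀ (x ξ : EuclideanSpace ℝ (Fin n)) (t : ℝ), 0 ≤ t →
      f (x + t • ξ) ξ t = f x ξ 0 + ∫ s in Icc (0:ℝ) t, g (x + s • ξ) ξ s)
    (hmeso_mass : ∀ (t : ℝ), 0 ≤ t → ∀ x, Integrable (fun ξ => g x ξ t) ∧ ∫ ξ, g x ξ t = 0)
    (hmeso_mom : ∀ (t : ℝ), 0 ≤ t → ∀ x, Integrable (fun ξ => g x ξ t • ξ) ∧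
      ∫ ξ, g x ξ t • ξ = (0 : EuclideanSpace ℝ (Fin n)))
    (hmeso_en : ∀ (t : ℝ), 0 ≤ t → ∀ x, Integrable (fun ξ => g x ξ t * ‖ξ‖ ^ 2) ∧
      ∫ ξ, g x ξ t * ‖ξ‖ ^ 2 = 0)
    (hf_int : Integrable (fun p : EuclideanSpace ℝ (Fin n) × EuclideanSpace ℝ (Fin n) =>
        f p.1 p.2 0 * (1 + ‖p.1‖ ^ 2 + ‖p.2‖ ^ 2)))
    (hg_char_int : ∀ T : ℝ, 0 < T →
      Integrable (fun q : (EuclideanSpace ℝ (Fin n) × EuclideanSpace ℝ (Fin n)) × ℝ =>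
        |g (q.1.1 + q.2 • q.1.2) q.1.2 q.2| * (1 + ‖q.1.1‖ ^ 2 + ‖q.1.2‖ ^ 2))
        ((volume : Measure (EuclideanSpace ℝ (Fin n) × EuclideanSpace ℝ (Fin n))).prod
          (volume.restrict (Icc (0:ℝ) T))))
    (t : ℝ) (ht : 0 ≤ t) (c : ℝ) :
    ∫ p : EuclideanSpace ℝ (Fin n) × EuclideanSpace ℝ (Fin n),
        f p.1 p.2 t * ‖p.1 - (t - c) • p.2‖ ^ 2
      = ∫ p : EuclideanSpace ℝ (Fin n) × EuclideanSpace ℝ (Fin n),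
        f p.1 p.2 0 * ‖p.1 + c • p.2‖ ^ 2 := by
  rcases ht.eq_or_lt with rfl | htpos
  · simp
  have hf0 : Integrable (fun p : EuclideanSpace ℝ (Fin n) × EuclideanSpace ℝ (Fin n) =>
      f p.1 p.2 0 * ‖p.1 + c • p.2‖ ^ 2) := by
    refine (hf_int.const_mul (2 * (1 + c ^ 2))).mono ?_ (Eventually.of_forall fun p => ?_)
    · have : Measurable fun p : EuclideanSpace ℝ (Fin n) × EuclideanSpace ℝ (Fin n) =>
          f p.1 p.2 0 := hf_meas.comp (measurable_id.prodMk measurable_const)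
      exact (this.mul (by fun_prop)).aestronglyMeasurable
    · have hb := norm_add_smul_sq_le c p.1 p.2
      have hp : 0 ≤ 1 + ‖p.1‖ ^ 2 + ‖p.2‖ ^ 2 := by positivity
      rw [norm_mul, norm_mul (2 * (1 + c ^ 2)), norm_mul _ (1 + _ + _), Real.norm_of_nonneg (sq_nonneg ‖p.1 + c • p.2‖),
        Real.norm_of_nonneg hp, Real.norm_of_nonneg (by positivity : (0:ℝ) ≤ 2 * (1 + c ^ 2))]
      nlinarith [mul_le_mul_of_nonneg_left hb (norm_nonneg (f p.1 p.2 0))]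
  have hH : Integrable (fun q : (EuclideanSpace ℝ (Fin n) × EuclideanSpace ℝ (Fin n)) × ℝ =>
      g (q.1.1 + q.2 • q.1.2) q.1.2 q.2 * ‖q.1.1 + c • q.1.2‖ ^ 2)
      ((volume : Measure (EuclideanSpace ℝ (Fin n) × EuclideanSpace ℝ (Fin n))).prod
          (volume.restrict (Icc (0:ℝ) t))) := by
    refine ((hg_char_int t htpos).const_mul (2 * (1 + c ^ 2))).mono ?_
      (Eventually.of_forall fun q => ?_)
    · have : Measurable fun q : (EuclideanSpace ℝ (Fin n) × EuclideanSpace ℝ (Fin n)) × ℝ =>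
          g (q.1.1 + q.2 • q.1.2) q.1.2 q.2 := by
        have hchar : Measurable
            fun q : (EuclideanSpace ℝ (Fin n) × EuclideanSpace ℝ (Fin n)) × ℝ =>
              ((q.1.1 + q.2 • q.1.2, q.1.2), q.2) := by fun_prop
        exact hg_meas.comp hchar
      exact (this.mul (by fun_prop)).aestronglyMeasurable
    · have hb := norm_add_smul_sq_le c q.1.1 q.1.2
      have hp : 0 ≤ 1 + ‖q.1.1‖ ^ 2 + ‖q.1.2‖ ^ 2 := by positivity
      rw [norm_mul, norm_mul (2 * (1 + c ^ 2)), norm_mul _ (1 + _ + _), Real.norm_of_nonneg (sq_nonneg ‖q.1.1 + c • q.1.2‖),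
        Real.norm_of_nonneg hp, Real.norm_of_nonneg (by positivity : (0:ℝ) ≤ 2 * (1 + c ^ 2)),
        Real.norm_eq_abs, Real.norm_eq_abs, abs_abs]
      nlinarith [mul_le_mul_of_nonneg_left hb
        (abs_nonneg (g (q.1.1 + q.2 • q.1.2) q.1.2 q.2))]
  have hzero : ∫ p : EuclideanSpace ℝ (Fin n) × EuclideanSpace ℝ (Fin n),
      ∫ s in Icc (0:ℝ) t, g (p.1 + s • p.2) p.2 s * ‖p.1 + c • p.2‖ ^ 2 = 0 := by
    rw [integral_integral_swap (f := fun (p : EuclideanSpace ℝ (Fin n) × EuclideanSpace ℝ (Fin n))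
      (s : ℝ) => g (p.1 + s • p.2) p.2 s * ‖p.1 + c • p.2‖ ^ 2) hH]
    refine integral_eq_zero_of_ae ?_
    filter_upwards [hH.prod_left_ae, ae_restrict_mem measurableSet_Icc] with s hs hsI
    -- the integrand at time `s`, expressed in the variables `y = x + s ξ` and `ξ`
    let K : EuclideanSpace ℝ (Fin n) × EuclideanSpace ℝ (Fin n) → ℝ :=
      fun p => g p.1 p.2 s * ‖p.1 + (c - s) • p.2‖ ^ 2
    have hK : (fun p : EuclideanSpace ℝ (Fin n) × EuclideanSpace ℝ (Fin n) =>
        g (p.1 + s • p.2) p.2 s * ‖p.1 + c • p.2‖ ^ 2) = K ∘ transportEquiv n s := by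
      funext p
      change _ = g (p.1 + s • p.2) p.2 s * ‖p.1 + s • p.2 + (c - s) • p.2‖ ^ 2
      rw [add_assoc, ← add_smul, add_sub_cancel]
    have mp := measurePreserving_transportEquiv n s
    have hKint : Integrable K := by
      rw [← mp.integrable_comp_emb (transportEquiv n s).measurableEmbedding, ← hK]
      exact hs
    change ∫ p : EuclideanSpace ℝ (Fin n) × EuclideanSpace ℝ (Fin n),
        g (p.1 + s • p.2) p.2 s * ‖p.1 + c • p.2‖ ^ 2 = 0
    rw [hK]
    refine (mp.integral_comp (transportEquiv n s).measurableEmbedding K).trans ?_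
    refine (integral_prod K hKint).trans ?_
    refine integral_eq_zero_of_ae (Eventually.of_forall fun y => ?_)
    exact integral_mul_norm_add_smul_sq_eq_zero (fun ξ => g y ξ s) (hmeso_mass s hsI.1 y)
      (hmeso_mom s hsI.1 y) (hmeso_en s hsI.1 y) y (c - s)
  rw [← (measurePreserving_transportEquiv n t).integral_comp
    (transportEquiv n t).measurableEmbedding]
  have e : ∀ p : EuclideanSpace ℝ (Fin n) × EuclideanSpace ℝ (Fin n),
      f (transportEquiv n t p).1 (transportEquiv n t p).2 t
        * ‖(transportEquiv n t p).1 - (t - c) • (transportEquiv n t p).2‖ ^ 2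
      = f p.1 p.2 0 * ‖p.1 + c • p.2‖ ^ 2
        + ∫ s in Icc (0:ℝ) t, g (p.1 + s • p.2) p.2 s * ‖p.1 + c • p.2‖ ^ 2 := by
    intro p
    change f (p.1 + t • p.2) p.2 t * ‖p.1 + t • p.2 - (t - c) • p.2‖ ^ 2 = _
    rw [h_mild p.1 p.2 t ht, integral_mul_const, add_sub_assoc, ← sub_smul, sub_sub_cancel,
      add_mul]
  simp_rw [e]
  rw [integral_add hf0 hH.integral_prod_left, hzero, add_zero]

/-- Evolution of the localization of mass: for every `t ≥ 0`,
`∬ f(x,ξ,t)|x|² = ∬ f(x,ξ,0)|x|² + 2t·A(0) + t²·E` and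
`∬ f(x,ξ,t)|x−tξ|² = ∬ f(x,ξ,0)|x|²`. -/
theorem localization_parabolic {n : ℕ} (hn : 1 ≤ n)
    (f g : EuclideanSpace ℝ (Fin n) → EuclideanSpace ℝ (Fin n) → ℝ → ℝ)
    (hf_nonneg : ∀ x ξ t, (0:ℝ) ≤ t → 0 ≤ f x ξ t)
    (hf_meas : Measurable fun p : (EuclideanSpace ℝ (Fin n) × EuclideanSpace ℝ (Fin n)) × ℝ =>
      f p.1.1 p.1.2 p.2)
    (hg_meas : Measurable fun p : (EuclideanSpace ℝ (Fin n) × EuclideanSpace ℝ (Fin n)) × ℝ =>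
      g p.1.1 p.1.2 p.2)
    -- mild solution along characteristics
    (h_mild : ∀ (x ξ : EuclideanSpace ℝ (Fin n)) (t : ℝ), 0 ≤ t →
      f (x + t • ξ) ξ t = f x ξ 0 + ∫ s in Icc (0:ℝ) t, g (x + s • ξ) ξ s)
    -- `g` is a mesoscopic interaction
    (hmeso_mass : ∀ (t : ℝ), 0 ≤ t → ∀ x, Integrable (fun ξ => g x ξ t) ∧ ∫ ξ, g x ξ t = 0)
    (hmeso_mom : ∀ (t : ℝ), 0 ≤ t → ∀ x, Integrable (fun ξ => g x ξ t • ξ) ∧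
      ∫ ξ, g x ξ t • ξ = (0 : EuclideanSpace ℝ (Fin n)))
    (hmeso_en : ∀ (t : ℝ), 0 ≤ t → ∀ x, Integrable (fun ξ => g x ξ t * ‖ξ‖ ^ 2) ∧
      ∫ ξ, g x ξ t * ‖ξ‖ ^ 2 = 0)
    -- finiteness of mass, energy and second moments at every time
    (hf_int : ∀ (t : ℝ), 0 ≤ t →
      Integrable (fun p : EuclideanSpace ℝ (Fin n) × EuclideanSpace ℝ (Fin n) =>
        f p.1 p.2 t * (1 + ‖p.1‖ ^ 2 + ‖p.2‖ ^ 2)))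
    -- integrability of the interaction along characteristics with second moments
    (hg_char_int : ∀ T : ℝ, 0 < T →
      Integrable (fun q : (EuclideanSpace ℝ (Fin n) × EuclideanSpace ℝ (Fin n)) × ℝ =>
        |g (q.1.1 + q.2 • q.1.2) q.1.2 q.2| * (1 + ‖q.1.1‖ ^ 2 + ‖q.1.2‖ ^ 2))
        ((volume : Measure (EuclideanSpace ℝ (Fin n) × EuclideanSpace ℝ (Fin n))).prod
          (volume.restrict (Icc (0:ℝ) T))))
    -- the total energy
    (Energy : ℝ)
    (hE : Energy = ∫ p : EuclideanSpace ℝ (Fin n) × EuclideanSpace ℝ (Fin n),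
      f p.1 p.2 0 * ‖p.2‖ ^ 2)
    -- localization of mass at time zero
    (hf_loc : Integrable (fun p : EuclideanSpace ℝ (Fin n) × EuclideanSpace ℝ (Fin n) =>
      f p.1 p.2 0 * ‖p.1‖ ^ 2)) :
    ∀ (t : ℝ), 0 ≤ t →
      ((∫ p : EuclideanSpace ℝ (Fin n) × EuclideanSpace ℝ (Fin n), f p.1 p.2 t * ‖p.1‖ ^ 2)
        = (∫ p : EuclideanSpace ℝ (Fin n) × EuclideanSpace ℝ (Fin n), f p.1 p.2 0 * ‖p.1‖ ^ 2)
          + 2 * t * (∫ p : EuclideanSpace ℝ (Fin n) × EuclideanSpace ℝ (Fin n),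
              f p.1 p.2 0 * ⟪p.1, p.2⟫)
          + t ^ 2 * Energy)
      ∧ (∫ p : EuclideanSpace ℝ (Fin n) × EuclideanSpace ℝ (Fin n),
            f p.1 p.2 t * ‖p.1 - t • p.2‖ ^ 2)
        = ∫ p : EuclideanSpace ℝ (Fin n) × EuclideanSpace ℝ (Fin n), f p.1 p.2 0 * ‖p.1‖ ^ 2 := by
  intro t ht
  have key := weighted_moment_eq f g hf_meas hg_meas h_mild hmeso_mass hmeso_mom hmeso_en
    (hf_int 0 le_rfl) hg_char_int t ht
  refine ⟨?_, by simpa using key 0⟩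
  have hm0 : Measurable fun p : EuclideanSpace ℝ (Fin n) × EuclideanSpace ℝ (Fin n) =>
      f p.1 p.2 0 := hf_meas.comp (measurable_id.prodMk measurable_const)
  have hEn : Integrable (fun p : EuclideanSpace ℝ (Fin n) × EuclideanSpace ℝ (Fin n) =>
      f p.1 p.2 0 * ‖p.2‖ ^ 2) := by
    refine (hf_int 0 le_rfl).mono (hm0.mul (by fun_prop)).aestronglyMeasurable
      (Eventually.of_forall fun p => ?_)
    have h0 := hf_nonneg p.1 p.2 0 le_rfl
    rw [Real.norm_of_nonneg (by positivity), Real.norm_of_nonneg (by positivity)]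
    gcongr
    nlinarith [sq_nonneg ‖p.1‖]
  have hA : Integrable (fun p : EuclideanSpace ℝ (Fin n) × EuclideanSpace ℝ (Fin n) =>
      f p.1 p.2 0 * ⟪p.1, p.2⟫) := by
    refine (hf_int 0 le_rfl).mono (hm0.mul (by fun_prop)).aestronglyMeasurable
      (Eventually.of_forall fun p => ?_)
    have h0 := hf_nonneg p.1 p.2 0 le_rfl
    have hi : ‖⟪p.1, p.2⟫‖ ≤ ‖p.1‖ * ‖p.2‖ := norm_inner_le_norm p.1 p.2
    have hp : 0 ≤ 1 + ‖p.1‖ ^ 2 + ‖p.2‖ ^ 2 := by positivity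
    rw [norm_mul, norm_mul, Real.norm_of_nonneg hp]
    gcongr
    nlinarith [sq_nonneg (‖p.1‖ - ‖p.2‖), sq_nonneg ‖p.1‖, sq_nonneg ‖p.2‖]
  have hkt := key t
  simp only [sub_self, zero_smul, sub_zero] at hkt
  rw [hkt, hE, ← integral_const_mul, ← integral_const_mul,
    ← integral_add hf_loc (hA.const_mul _),
    ← integral_add (hf_loc.fun_add (hA.const_mul _)) (hEn.const_mul _)]
  refine integral_congr_ae (Eventually.of_forall fun p => ?_)
  simp only [norm_add_smul_sq_eq]
  ring
end
end

section
/- The relative angular norm is bounded: ‖f‖_G = sup_{t≥0}(U(t) − A(t)) ≤ ∬_{ℝⁿ×ℝⁿ} f(x,ξ,0)(|x|²+|ξ|²) dx dξ − A(0). Moreover, if E > 0 then the uncertainty tends to infinity: U(t) → ∞ as t → ∞. -/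
/-!
The whole argument takes place in characteristic coordinates: after the measure-preserving shear
`(x, ξ) ↦ (x + tξ, ξ)`, the density at time `t` becomes `h(x, ξ) = f(x + tξ, ξ, t)`.

For a quadratic weight `φ = a|x|² + b x·ξ + c|ξ|²` the integral `∬ h φ` does not depend on `t`
(`integral_char_quad`). Indeed `h - f(·,·,0) = ∫₀ᵗ g(x + sξ, ξ, s) ds`, and undoing the shear at
time `s` turns `φ` into `φ(x - sξ, ξ)`, which is again a combination of `|x|²`, `x·ξ` and `|ξ|²`;
its integral against `g(x, ·, s)` vanishes for each `x` since `g` has no mass, momentum or energy.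

Now `A(t) = ∬ h (x·ξ + t|ξ|²) = A(0) + tE`, and
`|x + tξ||ξ| ≤ (|x|² + |ξ|²)/2 + t|ξ|²` gives `U(t) - A(t) ≤ ∬ f₀ (|x|² + |ξ|²)/2 - A(0)`.
Finally `U(t) ≥ A(t) = A(0) + tE`, which tends to infinity when `E > 0`.
-/

open MeasureTheory Real Filter Set
open scoped RealInnerProductSpace ENNReal

noncomputable section

section Aux

variable {E : Type*} [NormedAddCommGroup E] [InnerProductSpace ℝ E]

/-- The free transport `(x, ξ) ↦ (x + sξ, ξ)` on phase space. -/
def shear (s : ℝ) : E × E ≃ₜ E × E where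
  toFun p := (p.1 + s • p.2, p.2)
  invFun p := (p.1 - s • p.2, p.2)
  left_inv p := by simp
  right_inv p := by simp
  continuous_toFun := by fun_prop
  continuous_invFun := by fun_prop

/-- The quadratic weight `a|x|² + b x·ξ + c|ξ|²`. -/
def quad (a b c : ℝ) (p : E × E) : ℝ := a * ‖p.1‖ ^ 2 + b * ⟪p.1, p.2⟫ + c * ‖p.2‖ ^ 2

lemma abs_inner_le_half (x ξ : E) : |⟪x, ξ⟫| ≤ (‖x‖ ^ 2 + ‖ξ‖ ^ 2) / 2 := by
  have := abs_real_inner_le_norm x ξ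
  nlinarith [sq_nonneg (‖x‖ - ‖ξ‖)]

lemma abs_quad_le (a b c : ℝ) (p : E × E) :
    |quad a b c p| ≤ (|a| + |b| + |c|) * (1 + ‖p.1‖ ^ 2 + ‖p.2‖ ^ 2) := by
  have h1 := abs_inner_le_half p.1 p.2
  have h2 : |quad a b c p| ≤ |a| * ‖p.1‖ ^ 2 + |b| * |⟪p.1, p.2⟫| + |c| * ‖p.2‖ ^ 2 := by
    refine (abs_add_three _ _ _).trans (le_of_eq ?_)
    simp [abs_mul]
  have h3 : |b| * |⟪p.1, p.2⟫| ≤ |b| * (1 + ‖p.1‖ ^ 2 + ‖p.2‖ ^ 2) :=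
    mul_le_mul_of_nonneg_left (by nlinarith [sq_nonneg ‖p.1‖, sq_nonneg ‖p.2‖]) (abs_nonneg b)
  have h4 : |a| * ‖p.1‖ ^ 2 ≤ |a| * (1 + ‖p.1‖ ^ 2 + ‖p.2‖ ^ 2) :=
    mul_le_mul_of_nonneg_left (by nlinarith [sq_nonneg ‖p.1‖, sq_nonneg ‖p.2‖]) (abs_nonneg a)
  have h5 : |c| * ‖p.2‖ ^ 2 ≤ |c| * (1 + ‖p.1‖ ^ 2 + ‖p.2‖ ^ 2) :=
    mul_le_mul_of_nonneg_left (by nlinarith [sq_nonneg ‖p.1‖, sq_nonneg ‖p.2‖]) (abs_nonneg c)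
  nlinarith

lemma continuous_quad (a b c : ℝ) : Continuous (quad (E := E) a b c) := by
  unfold quad; fun_prop

/-- Quadratic weights are stable under the backward shear. -/
lemma quad_shear_symm (a b c s : ℝ) (p : E × E) :
    quad a b c ((shear s).symm p) = quad a (b - 2 * a * s) (c - b * s + a * s ^ 2) p := by
  have : (shear s).symm p = (p.1 - s • p.2, p.2) := rfl
  simp only [this, quad, norm_sub_sq_real, inner_sub_left, inner_smul_left, inner_smul_right,
    norm_smul, real_inner_self_eq_norm_sq, mul_pow, Real.norm_eq_abs, sq_abs]
  simp
  ring

variable [MeasurableSpace E] [BorelSpace E] [FiniteDimensional ℝ E]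

lemma measurePreserving_shear (s : ℝ) :
    MeasurePreserving (shear (E := E) s) volume volume := by
  have h : MeasurePreserving (fun p : E × E => (p.1, p.2 + s • p.1))
      ((volume : Measure E).prod volume) ((volume : Measure E).prod volume) :=
    (MeasurePreserving.id (volume : Measure E)).skew_product
      (g := fun ξ x => x + s • ξ) (by fun_prop)
      (Eventually.of_forall fun ξ => (measurePreserving_add_right volume (s • ξ)).map_eq)
  exact (Measure.measurePreserving_swap.comp h).comp Measure.measurePreserving_swap

lemma integral_shear (s : ℝ) (F : E × E → ℝ) : ∫ p, F (shear s p) = ∫ p, F p :=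
  (measurePreserving_shear s).integral_comp (shear s).measurableEmbedding F

lemma integrable_shear (s : ℝ) (F : E × E → ℝ) :
    Integrable (fun p => F (shear s p)) ↔ Integrable F :=
  (measurePreserving_shear s).integrable_comp_emb (shear s).measurableEmbedding

/-- A density with finite second moments is integrable against any continuous weight of
quadratic growth. -/
lemma integrable_mul_weight {u φ : E × E → ℝ} {C : ℝ} (hu : Measurable u) (hφ : Continuous φ)
    (hui : Integrable fun p => u p * (1 + ‖p.1‖ ^ 2 + ‖p.2‖ ^ 2))
    (hC : ∀ p, |φ p| ≤ C * (1 + ‖p.1‖ ^ 2 + ‖p.2‖ ^ 2)) :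
    Integrable fun p => u p * φ p := by
  refine (hui.norm.const_mul C).mono' (hu.mul hφ.measurable).aestronglyMeasurable
    (Eventually.of_forall fun p => ?_)
  have hw : 0 ≤ 1 + ‖p.1‖ ^ 2 + ‖p.2‖ ^ 2 := by positivity
  rw [norm_mul, norm_mul, Real.norm_eq_abs, Real.norm_eq_abs, Real.norm_eq_abs, abs_of_nonneg hw]
  nlinarith [mul_le_mul_of_nonneg_left (hC p) (abs_nonneg (u p))]

/-- Finiteness of second moments is preserved by passing to characteristic coordinates. -/
lemma integrable_shear_weight {u : E × E → ℝ} (s : ℝ) (hu : Measurable u)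
    (hui : Integrable fun p => u p * (1 + ‖p.1‖ ^ 2 + ‖p.2‖ ^ 2)) :
    Integrable fun p => u (shear s p) * (1 + ‖p.1‖ ^ 2 + ‖p.2‖ ^ 2) := by
  have key : Integrable fun p : E × E => u p * (1 + quad 1 (-(2 * s)) (1 + s ^ 2) p) := by
    refine integrable_mul_weight (C := 1 + (|1| + |-(2 * s)| + |1 + s ^ 2|)) hu
      (continuous_const.add (continuous_quad _ _ _)) hui fun p => ?_
    refine (abs_add_le _ _).trans ?_
    have := abs_quad_le 1 (-(2 * s)) (1 + s ^ 2) p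
    rw [abs_one] at *
    nlinarith [sq_nonneg ‖p.1‖, sq_nonneg ‖p.2‖]
  rw [← integrable_shear s] at key
  refine key.congr (Eventually.of_forall fun p => ?_)
  have h := quad_shear_symm 1 0 1 s (shear s p)
  rw [Homeomorph.symm_apply_apply] at h
  simp only [mul_one, zero_mul, sub_zero, one_mul, zero_sub] at h
  simp only
  rw [← h]
  simp [quad, add_assoc]

/-- An interaction without mass, momentum and energy is orthogonal to every quadratic weight,
including after transport along characteristics. -/
lemma integral_interaction_quad {g : E → E → ℝ} (s a b c : ℝ)
    (h0 : ∀ x, Integrable (fun ξ => g x ξ) ∧ ∫ ξ, g x ξ = 0)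
    (h1 : ∀ x, Integrable (fun ξ => g x ξ • ξ) ∧ ∫ ξ, g x ξ • ξ = (0 : E))
    (h2 : ∀ x, Integrable (fun ξ => g x ξ * ‖ξ‖ ^ 2) ∧ ∫ ξ, g x ξ * ‖ξ‖ ^ 2 = 0) :
    ∫ p : E × E, g (p.1 + s • p.2) p.2 * quad a b c p = 0 := by
  have e : ∀ p : E × E, g (p.1 + s • p.2) p.2 * quad a b c p =
      (fun q : E × E => g q.1 q.2 * quad a b c ((shear s).symm q)) (shear s p) := by
    intro p
    simp only [Homeomorph.symm_apply_apply]
    rfl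
  simp_rw [e]
  rw [integral_shear s (fun q : E × E => g q.1 q.2 * quad a b c ((shear s).symm q))]
  simp_rw [quad_shear_symm]
  generalize b - 2 * a * s = b'
  generalize c - b * s + a * s ^ 2 = c'
  by_cases hi : Integrable fun q : E × E => g q.1 q.2 * quad a b' c' q
  · rw [Measure.volume_eq_prod] at hi ⊢
    rw [integral_prod _ hi]
    refine integral_eq_zero_of_ae (Eventually.of_forall fun x => ?_)
    have e2 : ∀ ξ, g x ξ * quad a b' c' (x, ξ) =
        (a * ‖x‖ ^ 2) * g x ξ + b' * ⟪x, g x ξ • ξ⟫ + c' * (g x ξ * ‖ξ‖ ^ 2) := by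
      intro ξ
      simp only [quad, inner_smul_right]
      ring
    have i1 : Integrable fun ξ => ⟪x, g x ξ • ξ⟫ := (h1 x).1.const_inner x
    simp only [e2]
    have i2 : Integrable fun ξ => (a * ‖x‖ ^ 2) * g x ξ + b' * ⟪x, g x ξ • ξ⟫ :=
      ((h0 x).1.const_mul _).add (i1.const_mul _)
    rw [integral_add i2 ((h2 x).1.const_mul _),
      integral_add ((h0 x).1.const_mul _) (i1.const_mul _), integral_const_mul,
      integral_const_mul, integral_const_mul, integral_inner (h1 x).1, (h0 x).2, (h1 x).2,
      (h2 x).2]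
    simp
  -- For the times at which the product is not integrable, its Bochner integral is `0` by convention.
  · exact integral_undef hi

/-- Conservation law: quadratic moments in characteristic coordinates are constant in time. -/
lemma integral_char_quad {f g : E → E → ℝ → ℝ}
    (hf_meas : Measurable fun p : (E × E) × ℝ => f p.1.1 p.1.2 p.2)
    (hg_meas : Measurable fun p : (E × E) × ℝ => g p.1.1 p.1.2 p.2)
    (h_mild : ∀ (x ξ : E) (t : ℝ), 0 ≤ t →
      f (x + t • ξ) ξ t = f x ξ 0 + ∫ s in Icc (0:ℝ) t, g (x + s • ξ) ξ s)
    (hmeso_mass : ∀ (t : ℝ), 0 ≤ t → ∀ x, Integrable (fun ξ => g x ξ t) ∧ ∫ ξ, g x ξ t = 0)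
    (hmeso_mom : ∀ (t : ℝ), 0 ≤ t → ∀ x, Integrable (fun ξ => g x ξ t • ξ) ∧
      ∫ ξ, g x ξ t • ξ = (0 : E))
    (hmeso_en : ∀ (t : ℝ), 0 ≤ t → ∀ x, Integrable (fun ξ => g x ξ t * ‖ξ‖ ^ 2) ∧
      ∫ ξ, g x ξ t * ‖ξ‖ ^ 2 = 0)
    (hf_int : ∀ (t : ℝ), 0 ≤ t →
      Integrable (fun p : E × E => f p.1 p.2 t * (1 + ‖p.1‖ ^ 2 + ‖p.2‖ ^ 2)))
    (hg_char_int : ∀ T : ℝ, 0 < T →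
      Integrable (fun q : (E × E) × ℝ =>
        |g (q.1.1 + q.2 • q.1.2) q.1.2 q.2| * (1 + ‖q.1.1‖ ^ 2 + ‖q.1.2‖ ^ 2))
        ((volume : Measure (E × E)).prod (volume.restrict (Icc (0:ℝ) T))))
    (a b c : ℝ) {t : ℝ} (ht : 0 ≤ t) :
    ∫ p : E × E, f (p.1 + t • p.2) p.2 t * quad a b c p =
      ∫ p : E × E, f p.1 p.2 0 * quad a b c p := by
  have hm : ∀ t, Measurable fun p : E × E => f p.1 p.2 t := fun t =>
    hf_meas.comp (measurable_id.prodMk measurable_const)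
  rcases ht.eq_or_lt with rfl | htpos
  · simp
  have hi0 : Integrable fun p : E × E => f p.1 p.2 0 * quad a b c p :=
    integrable_mul_weight (hm 0) (continuous_quad a b c) (hf_int 0 le_rfl) (abs_quad_le a b c)
  have hit : Integrable fun p : E × E => f (p.1 + t • p.2) p.2 t * quad a b c p :=
    integrable_mul_weight ((hm t).comp (shear t).measurable) (continuous_quad a b c)
      (integrable_shear_weight t (hm t) (hf_int t ht)) (abs_quad_le a b c)
  rw [← sub_eq_zero, ← integral_sub hit hi0]
  have e : ∀ p : E × E, f (p.1 + t • p.2) p.2 t * quad a b c p - f p.1 p.2 0 * quad a b c p =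
      ∫ s in Icc (0:ℝ) t, g (p.1 + s • p.2) p.2 s * quad a b c p := by
    intro p
    rw [integral_mul_const, h_mild _ _ _ ht]
    ring
  simp_rw [e]
  have hgm : Measurable fun q : (E × E) × ℝ => g (q.1.1 + q.2 • q.1.2) q.1.2 q.2 :=
    hg_meas.comp (f := fun q : (E × E) × ℝ => ((q.1.1 + q.2 • q.1.2, q.1.2), q.2)) (by fun_prop)
  have hG : Integrable (Function.uncurry fun (p : E × E) (s : ℝ) =>
      g (p.1 + s • p.2) p.2 s * quad a b c p)
      ((volume : Measure (E × E)).prod (volume.restrict (Icc (0:ℝ) t))) := by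
    refine ((hg_char_int t htpos).const_mul (|a| + |b| + |c|)).mono'
      (hgm.mul ((continuous_quad a b c).measurable.comp measurable_fst)).aestronglyMeasurable
      (Eventually.of_forall fun q => ?_)
    simp only [Function.uncurry, norm_mul, Real.norm_eq_abs]
    nlinarith [mul_le_mul_of_nonneg_left (abs_quad_le a b c q.1)
      (abs_nonneg (g (q.1.1 + q.2 • q.1.2) q.1.2 q.2))]
  rw [integral_integral_swap hG]
  refine setIntegral_eq_zero_of_forall_eq_zero fun s hs => ?_
  exact integral_interaction_quad (g := fun x ξ => g x ξ s) s a b c (hmeso_mass s hs.1)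
    (hmeso_mom s hs.1) (hmeso_en s hs.1)

end Aux

/-- The relative angular norm `‖f‖_G = sup_{t≥0} (U(t) − A(t))` is bounded by
`∬ f(x,ξ,0)(|x|²+|ξ|²) − A(0)`, and if `E > 0` the uncertainty `U(t)` tends to infinity. -/
theorem relative_angular_norm_bounded {n : ℕ} (hn : 1 ≤ n)
    (f g : EuclideanSpace ℝ (Fin n) → EuclideanSpace ℝ (Fin n) → ℝ → ℝ)
    (hf_nonneg : ∀ x ξ t, (0:ℝ) ≤ t → 0 ≤ f x ξ t)
    (hf_meas : Measurable fun p : (EuclideanSpace ℝ (Fin n) × EuclideanSpace ℝ (Fin n)) × ℝ =>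
      f p.1.1 p.1.2 p.2)
    (hg_meas : Measurable fun p : (EuclideanSpace ℝ (Fin n) × EuclideanSpace ℝ (Fin n)) × ℝ =>
      g p.1.1 p.1.2 p.2)
    -- mild solution along characteristics
    (h_mild : ∀ (x ξ : EuclideanSpace ℝ (Fin n)) (t : ℝ), 0 ≤ t →
      f (x + t • ξ) ξ t = f x ξ 0 + ∫ s in Icc (0:ℝ) t, g (x + s • ξ) ξ s)
    -- `g` is a mesoscopic interaction
    (hmeso_mass : ∀ (t : ℝ), 0 ≤ t → ∀ x, Integrable (fun ξ => g x ξ t) ∧ ∫ ξ, g x ξ t = 0)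
    (hmeso_mom : ∀ (t : ℝ), 0 ≤ t → ∀ x, Integrable (fun ξ => g x ξ t • ξ) ∧
      ∫ ξ, g x ξ t • ξ = (0 : EuclideanSpace ℝ (Fin n)))
    (hmeso_en : ∀ (t : ℝ), 0 ≤ t → ∀ x, Integrable (fun ξ => g x ξ t * ‖ξ‖ ^ 2) ∧
      ∫ ξ, g x ξ t * ‖ξ‖ ^ 2 = 0)
    -- finiteness of mass, energy and second moments at every time
    (hf_int : ∀ (t : ℝ), 0 ≤ t →
      Integrable (fun p : EuclideanSpace ℝ (Fin n) × EuclideanSpace ℝ (Fin n) =>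
        f p.1 p.2 t * (1 + ‖p.1‖ ^ 2 + ‖p.2‖ ^ 2)))
    -- integrability of the interaction along characteristics with second moments
    (hg_char_int : ∀ T : ℝ, 0 < T →
      Integrable (fun q : (EuclideanSpace ℝ (Fin n) × EuclideanSpace ℝ (Fin n)) × ℝ =>
        |g (q.1.1 + q.2 • q.1.2) q.1.2 q.2| * (1 + ‖q.1.1‖ ^ 2 + ‖q.1.2‖ ^ 2))
        ((volume : Measure (EuclideanSpace ℝ (Fin n) × EuclideanSpace ℝ (Fin n))).prod
          (volume.restrict (Icc (0:ℝ) T))))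
    -- the total energy
    (Energy : ℝ)
    (hE : Energy = ∫ p : EuclideanSpace ℝ (Fin n) × EuclideanSpace ℝ (Fin n),
      f p.1 p.2 0 * ‖p.2‖ ^ 2)
    -- localization of mass at time zero
    (hf_loc : Integrable (fun p : EuclideanSpace ℝ (Fin n) × EuclideanSpace ℝ (Fin n) =>
      f p.1 p.2 0 * ‖p.1‖ ^ 2)) :
    -- the supremum over `t ≥ 0` of `U(t) − A(t)` is bounded by `∬ f₀(|x|²+|ξ|²) − A(0)` ...
    (∀ (t : ℝ), 0 ≤ t →
      (∫ p : EuclideanSpace ℝ (Fin n) × EuclideanSpace ℝ (Fin n),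
          f p.1 p.2 t * (‖p.1‖ * ‖p.2‖))
        - (∫ p : EuclideanSpace ℝ (Fin n) × EuclideanSpace ℝ (Fin n),
            f p.1 p.2 t * ⟪p.1, p.2⟫)
      ≤ (∫ p : EuclideanSpace ℝ (Fin n) × EuclideanSpace ℝ (Fin n),
          f p.1 p.2 0 * (‖p.1‖ ^ 2 + ‖p.2‖ ^ 2))
        - ∫ p : EuclideanSpace ℝ (Fin n) × EuclideanSpace ℝ (Fin n),
            f p.1 p.2 0 * ⟪p.1, p.2⟫)
    -- ... and the uncertainty tends to infinity with time
    ∧ (0 < Energy →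
        Tendsto (fun t : ℝ => ∫ p : EuclideanSpace ℝ (Fin n) × EuclideanSpace ℝ (Fin n),
          f p.1 p.2 t * (‖p.1‖ * ‖p.2‖)) atTop atTop) := by
  have hm : ∀ t, Measurable fun p : EuclideanSpace ℝ (Fin n) × EuclideanSpace ℝ (Fin n) =>
      f p.1 p.2 t := fun t => hf_meas.comp (measurable_id.prodMk measurable_const)
  have cons := fun (a b c : ℝ) {t : ℝ} (ht : 0 ≤ t) => integral_char_quad hf_meas hg_meas h_mild
    hmeso_mass hmeso_mom hmeso_en hf_int hg_char_int a b c ht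
  have hi0 : ∀ a b c : ℝ, Integrable
      fun p : EuclideanSpace ℝ (Fin n) × EuclideanSpace ℝ (Fin n) =>
        f p.1 p.2 0 * quad a b c p := fun a b c =>
    integrable_mul_weight (hm 0) (continuous_quad a b c) (hf_int 0 le_rfl) (abs_quad_le a b c)
  have hit : ∀ (a b c : ℝ) {t : ℝ}, 0 ≤ t → Integrable
      fun p : EuclideanSpace ℝ (Fin n) × EuclideanSpace ℝ (Fin n) =>
        f (p.1 + t • p.2) p.2 t * quad a b c p := fun a b c {t} ht =>
    integrable_mul_weight ((hm t).comp (shear t).measurable) (continuous_quad a b c)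
      (integrable_shear_weight t (hm t) (hf_int t ht)) (abs_quad_le a b c)
  have hA : ∀ t : ℝ, 0 ≤ t →
      ∫ p : EuclideanSpace ℝ (Fin n) × EuclideanSpace ℝ (Fin n), f p.1 p.2 t * ⟪p.1, p.2⟫
        = ∫ p : EuclideanSpace ℝ (Fin n) × EuclideanSpace ℝ (Fin n),
            f p.1 p.2 0 * quad 0 1 t p := by
    intro t ht
    rw [← cons 0 1 t ht, ← integral_shear t]
    refine integral_congr_ae (Eventually.of_forall fun p => ?_)
    simp [shear, quad, inner_add_left, inner_smul_left]
  have hUint : ∀ t : ℝ, 0 ≤ t → Integrable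
      fun p : EuclideanSpace ℝ (Fin n) × EuclideanSpace ℝ (Fin n) =>
        f p.1 p.2 t * (‖p.1‖ * ‖p.2‖) := fun t ht =>
    integrable_mul_weight (C := 1) (hm t) (by fun_prop) (hf_int t ht) fun p => by
      rw [abs_of_nonneg (by positivity)]
      nlinarith [sq_nonneg (‖p.1‖ - ‖p.2‖), sq_nonneg ‖p.1‖, sq_nonneg ‖p.2‖]
  have hU : ∀ t : ℝ, 0 ≤ t →
      ∫ p : EuclideanSpace ℝ (Fin n) × EuclideanSpace ℝ (Fin n), f p.1 p.2 t * (‖p.1‖ * ‖p.2‖)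
        ≤ ∫ p : EuclideanSpace ℝ (Fin n) × EuclideanSpace ℝ (Fin n),
            f p.1 p.2 0 * quad (1 / 2) 0 (1 / 2 + t) p := by
    intro t ht
    rw [← cons (1 / 2) 0 (1 / 2 + t) ht, ← integral_shear t]
    refine integral_mono ((integrable_shear t _).2 (hUint t ht)) (hit _ _ _ ht) fun p => ?_
    refine mul_le_mul_of_nonneg_left ?_ (hf_nonneg _ _ t ht)
    have h1 : ‖p.1 + t • p.2‖ ≤ ‖p.1‖ + t * ‖p.2‖ := by
      refine (norm_add_le _ _).trans_eq ?_
      rw [norm_smul, Real.norm_of_nonneg ht]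
    have h2 := mul_le_mul_of_nonneg_right h1 (norm_nonneg p.2)
    change ‖p.1 + t • p.2‖ * ‖p.2‖ ≤ quad (1 / 2) 0 (1 / 2 + t) p
    simp only [quad]
    nlinarith [sq_nonneg (‖p.1‖ - ‖p.2‖)]
  constructor
  · intro t ht
    have e0 : ∫ p : EuclideanSpace ℝ (Fin n) × EuclideanSpace ℝ (Fin n),
          f p.1 p.2 0 * (‖p.1‖ ^ 2 + ‖p.2‖ ^ 2)
        = ∫ p : EuclideanSpace ℝ (Fin n) × EuclideanSpace ℝ (Fin n),
            f p.1 p.2 0 * quad 1 0 1 p := by simp [quad]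
    refine (sub_le_sub_right (hU t ht) _).trans ?_
    rw [hA t ht, hA 0 le_rfl, e0, ← integral_sub (hi0 _ _ _) (hi0 _ _ _),
      ← integral_sub (hi0 _ _ _) (hi0 _ _ _)]
    refine integral_mono ((hi0 _ _ _).sub (hi0 _ _ _)) ((hi0 _ _ _).sub (hi0 _ _ _)) fun p => ?_
    have h0 := hf_nonneg p.1 p.2 0 le_rfl
    simp only [quad, ← mul_sub]
    refine mul_le_mul_of_nonneg_left ?_ h0
    nlinarith [sq_nonneg ‖p.1‖, sq_nonneg ‖p.2‖]
  · intro hpos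
    have hlin : ∀ t : ℝ, 0 ≤ t →
        (∫ p : EuclideanSpace ℝ (Fin n) × EuclideanSpace ℝ (Fin n), f p.1 p.2 0 * quad 0 1 0 p)
          + t * Energy ≤ ∫ p : EuclideanSpace ℝ (Fin n) × EuclideanSpace ℝ (Fin n),
            f p.1 p.2 t * (‖p.1‖ * ‖p.2‖) := by
      intro t ht
      have e1 : t * Energy = ∫ p : EuclideanSpace ℝ (Fin n) × EuclideanSpace ℝ (Fin n),
          f p.1 p.2 0 * quad 0 0 t p := by
        rw [hE, ← integral_const_mul]
        refine integral_congr_ae (Eventually.of_forall fun p => ?_)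
        simp only [quad]
        ring
      have e2 : (∫ p : EuclideanSpace ℝ (Fin n) × EuclideanSpace ℝ (Fin n),
            f p.1 p.2 0 * quad 0 1 0 p) + t * Energy
          = ∫ p : EuclideanSpace ℝ (Fin n) × EuclideanSpace ℝ (Fin n),
            f p.1 p.2 t * ⟪p.1, p.2⟫ := by
        rw [e1, hA t ht, ← integral_add (hi0 _ _ _) (hi0 _ _ _)]
        refine integral_congr_ae (Eventually.of_forall fun p => ?_)
        simp only [quad]
        ring
      rw [e2]
      have hAint : Integrable
          fun p : EuclideanSpace ℝ (Fin n) × EuclideanSpace ℝ (Fin n) =>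
            f p.1 p.2 t * ⟪p.1, p.2⟫ := by
        simpa [quad] using integrable_mul_weight (hm t) (continuous_quad 0 1 0) (hf_int t ht)
          (abs_quad_le 0 1 0)
      exact integral_mono hAint (hUint t ht) fun p =>
        mul_le_mul_of_nonneg_left (real_inner_le_norm _ _) (hf_nonneg _ _ t ht)
    refine tendsto_atTop_mono' atTop ((eventually_ge_atTop 0).mono hlin) ?_
    exact tendsto_atTop_add_const_left _ _ (tendsto_id.atTop_mul_const hpos)
end
end

section
/- For every t ≥ 0 the uncertainty satisfies the two-sided bound A(0) + t·E ≤ U(t) ≤ ∬_{ℝⁿ×ℝⁿ} f(x,ξ,0)(|x|²+|ξ|²) dx dξ + t·E; in particular on average the uncertainty grows linearly in time with slope equal to the total energy E. -/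
/-!
Write `f♯(y, ξ, t) = f(y + tξ, ξ, t)` for the density transported back along characteristics, so
that `f♯(t) = f(0) + ∫₀ᵗ g♯`. If `φ(y, ξ)` is one of `|y|²`, `|ξ|²`, `y·ξ`, then for each fixed `x`
the weight `φ(x - sξ, ξ)` is a combination of `1`, `ξ` and `|ξ|²`, all of which `g(x, ·, s)`
annihilates. By Fubini and the volume-preserving shear `(y, ξ) ↦ (y + sξ, ξ)`, the moment
`∬ f♯(t) φ` does not depend on `t` (`moment_conserved`).

The same shear gives `U(t) = ∬ f♯(t) |y + tξ| |ξ|`, and both bounds follow by integrating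
`y·ξ + t|ξ|² ≤ |y + tξ| |ξ| ≤ |y|² + |ξ|² + t|ξ|²` against `f♯(t) ≥ 0`.
-/

open MeasureTheory Real Filter Set
open scoped RealInnerProductSpace ENNReal

noncomputable section

/-- Free transport preserves the Lebesgue measure on phase space. -/
lemma measurePreserving_shear_s3 {n : ℕ} (t : ℝ) :
    MeasurePreserving (fun p : EuclideanSpace ℝ (Fin n) × EuclideanSpace ℝ (Fin n) =>
      (p.1 + t • p.2, p.2)) := by
  have h : MeasurePreserving (fun p : EuclideanSpace ℝ (Fin n) × EuclideanSpace ℝ (Fin n) =>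
      (p.1, p.2 + t • p.1)) (volume.prod volume) (volume.prod volume) := by
    refine (MeasurePreserving.id volume).skew_product
      (g := fun a c : EuclideanSpace ℝ (Fin n) => c + t • a) (by fun_prop) ?_
    exact Eventually.of_forall fun a => (measurePreserving_add_right volume (t • a)).map_eq
  exact (Measure.measurePreserving_swap.comp h).comp Measure.measurePreserving_swap

/-- A weight `φ` of at most quadratic growth that, read along characteristics, is annihilated by
the interaction `g` has a conserved moment. -/
lemma moment_conserved {n : ℕ}
    (f g : EuclideanSpace ℝ (Fin n) → EuclideanSpace ℝ (Fin n) → ℝ → ℝ)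
    (hf_meas : Measurable fun p : (EuclideanSpace ℝ (Fin n) × EuclideanSpace ℝ (Fin n)) × ℝ =>
      f p.1.1 p.1.2 p.2)
    (hg_meas : Measurable fun p : (EuclideanSpace ℝ (Fin n) × EuclideanSpace ℝ (Fin n)) × ℝ =>
      g p.1.1 p.1.2 p.2)
    (t : ℝ) (ht : 0 ≤ t)
    (h_mild : ∀ x ξ : EuclideanSpace ℝ (Fin n),
      f (x + t • ξ) ξ t = f x ξ 0 + ∫ s in Icc (0:ℝ) t, g (x + s • ξ) ξ s)
    (hf_int : Integrable (fun p : EuclideanSpace ℝ (Fin n) × EuclideanSpace ℝ (Fin n) =>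
        f p.1 p.2 0 * (1 + ‖p.1‖ ^ 2 + ‖p.2‖ ^ 2)))
    (hg_char_int : 0 < t →
      Integrable (fun q : (EuclideanSpace ℝ (Fin n) × EuclideanSpace ℝ (Fin n)) × ℝ =>
        |g (q.1.1 + q.2 • q.1.2) q.1.2 q.2| * (1 + ‖q.1.1‖ ^ 2 + ‖q.1.2‖ ^ 2))
        ((volume : Measure (EuclideanSpace ℝ (Fin n) × EuclideanSpace ℝ (Fin n))).prod
          (volume.restrict (Icc (0:ℝ) t))))
    (φ : EuclideanSpace ℝ (Fin n) → EuclideanSpace ℝ (Fin n) → ℝ)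
    (hφ_meas : Measurable fun p : EuclideanSpace ℝ (Fin n) × EuclideanSpace ℝ (Fin n) =>
      φ p.1 p.2)
    (hφ : ∀ x ξ, |φ x ξ| ≤ 1 + ‖x‖ ^ 2 + ‖ξ‖ ^ 2)
    (h0 : ∀ s, 0 ≤ s → ∀ x, ∫ ξ, g x ξ s * φ (x - s • ξ) ξ = 0) :
    Integrable (fun p : EuclideanSpace ℝ (Fin n) × EuclideanSpace ℝ (Fin n) =>
      f p.1 p.2 0 * φ p.1 p.2) ∧
    Integrable (fun p : EuclideanSpace ℝ (Fin n) × EuclideanSpace ℝ (Fin n) =>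
      f (p.1 + t • p.2) p.2 t * φ p.1 p.2) ∧
    ∫ p : EuclideanSpace ℝ (Fin n) × EuclideanSpace ℝ (Fin n),
      f (p.1 + t • p.2) p.2 t * φ p.1 p.2 =
    ∫ p : EuclideanSpace ℝ (Fin n) × EuclideanSpace ℝ (Fin n), f p.1 p.2 0 * φ p.1 p.2 := by
  have hf0_meas : Measurable fun p : EuclideanSpace ℝ (Fin n) × EuclideanSpace ℝ (Fin n) =>
      f p.1 p.2 0 := hf_meas.comp (measurable_id.prodMk measurable_const)
  have hf0 : Integrable (fun p : EuclideanSpace ℝ (Fin n) × EuclideanSpace ℝ (Fin n) =>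
      f p.1 p.2 0 * φ p.1 p.2) := by
    refine hf_int.mono (hf0_meas.mul hφ_meas).aestronglyMeasurable
      (Eventually.of_forall fun p => ?_)
    rw [norm_mul, norm_mul]
    exact mul_le_mul_of_nonneg_left ((hφ _ _).trans (le_abs_self _)) (norm_nonneg _)
  have hgs_meas : Measurable fun q : (EuclideanSpace ℝ (Fin n) × EuclideanSpace ℝ (Fin n)) × ℝ =>
      g (q.1.1 + q.2 • q.1.2) q.1.2 q.2 := by
    have hm : Measurable fun q : (EuclideanSpace ℝ (Fin n) × EuclideanSpace ℝ (Fin n)) × ℝ =>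
      ((q.1.1 + q.2 • q.1.2, q.1.2), q.2) := by fun_prop
    exact hg_meas.comp hm
  have hG : Integrable (fun q : (EuclideanSpace ℝ (Fin n) × EuclideanSpace ℝ (Fin n)) × ℝ =>
        g (q.1.1 + q.2 • q.1.2) q.1.2 q.2 * φ q.1.1 q.1.2)
        ((volume : Measure (EuclideanSpace ℝ (Fin n) × EuclideanSpace ℝ (Fin n))).prod
          (volume.restrict (Icc (0:ℝ) t))) := by
    rcases ht.eq_or_lt with rfl | hpos
    · simp
    · refine (hg_char_int hpos).mono
        (hgs_meas.mul (hφ_meas.comp measurable_fst)).aestronglyMeasurable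
        (Eventually.of_forall fun q => ?_)
      rw [norm_mul, norm_mul, norm_eq_abs |_|, abs_abs]
      exact mul_le_mul_of_nonneg_left ((hφ _ _).trans (le_abs_self _)) (abs_nonneg _)
  have hsplit : (fun p : EuclideanSpace ℝ (Fin n) × EuclideanSpace ℝ (Fin n) =>
      f (p.1 + t • p.2) p.2 t * φ p.1 p.2) = fun p => f p.1 p.2 0 * φ p.1 p.2 +
        ∫ s in Icc (0:ℝ) t, g (p.1 + s • p.2) p.2 s * φ p.1 p.2 := by
    funext p
    rw [h_mild, add_mul, integral_mul_const]
  have hGl := hG.integral_prod_left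
  refine ⟨hf0, ?_, ?_⟩
  · rw [hsplit]
    exact hf0.add hGl
  · rw [hsplit, integral_add hf0 hGl, integral_integral_swap hG, add_eq_left]
    refine setIntegral_eq_zero_of_forall_eq_zero fun s hs => ?_
    have hgx_meas : Measurable fun p : EuclideanSpace ℝ (Fin n) × EuclideanSpace ℝ (Fin n) =>
        g p.1 p.2 s * φ (p.1 - s • p.2) p.2 := by
      have hm : Measurable fun p : EuclideanSpace ℝ (Fin n) × EuclideanSpace ℝ (Fin n) =>
        (p.1 - s • p.2, p.2) := by fun_prop
      exact (hg_meas.comp (measurable_id.prodMk measurable_const)).mul (hφ_meas.comp hm)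
    have hcov : ∫ p : EuclideanSpace ℝ (Fin n) × EuclideanSpace ℝ (Fin n),
        g (p.1 + s • p.2) p.2 s * φ p.1 p.2 =
        ∫ p : EuclideanSpace ℝ (Fin n) × EuclideanSpace ℝ (Fin n),
          g p.1 p.2 s * φ (p.1 - s • p.2) p.2 := by
      rw [← (measurePreserving_shear_s3 s).map_eq,
        integral_map (measurePreserving_shear_s3 s).measurable.aemeasurable
          hgx_meas.aestronglyMeasurable, (measurePreserving_shear_s3 s).map_eq]
      simp
    rw [hcov]
    -- Without integrability the Bochner integral is zero by convention, so Fubini is only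
    -- needed in the integrable case.
    by_cases hi : Integrable (fun p : EuclideanSpace ℝ (Fin n) × EuclideanSpace ℝ (Fin n) =>
        g p.1 p.2 s * φ (p.1 - s • p.2) p.2)
    · rw [Measure.volume_eq_prod] at hi ⊢
      rw [integral_prod _ hi]
      simp [h0 s hs.1]
    · exact integral_undef hi

/-- Two-sided bound for the uncertainty:
`A(0) + t·E ≤ U(t) ≤ ∬ f(x,ξ,0)(|x|²+|ξ|²) + t·E` for every `t ≥ 0`. -/
theorem uncertainty_two_sided_bound {n : ℕ} (hn : 1 ≤ n)
    (f g : EuclideanSpace ℝ (Fin n) → EuclideanSpace ℝ (Fin n) → ℝ → ℝ)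
    (hf_nonneg : ∀ x ξ t, (0:ℝ) ≤ t → 0 ≤ f x ξ t)
    (hf_meas : Measurable fun p : (EuclideanSpace ℝ (Fin n) × EuclideanSpace ℝ (Fin n)) × ℝ =>
      f p.1.1 p.1.2 p.2)
    (hg_meas : Measurable fun p : (EuclideanSpace ℝ (Fin n) × EuclideanSpace ℝ (Fin n)) × ℝ =>
      g p.1.1 p.1.2 p.2)
    -- mild solution along characteristics
    (h_mild : ∀ (x ξ : EuclideanSpace ℝ (Fin n)) (t : ℝ), 0 ≤ t →
      f (x + t • ξ) ξ t = f x ξ 0 + ∫ s in Icc (0:ℝ) t, g (x + s • ξ) ξ s)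
    -- `g` is a mesoscopic interaction
    (hmeso_mass : ∀ (t : ℝ), 0 ≤ t → ∀ x, Integrable (fun ξ => g x ξ t) ∧ ∫ ξ, g x ξ t = 0)
    (hmeso_mom : ∀ (t : ℝ), 0 ≤ t → ∀ x, Integrable (fun ξ => g x ξ t • ξ) ∧
      ∫ ξ, g x ξ t • ξ = (0 : EuclideanSpace ℝ (Fin n)))
    (hmeso_en : ∀ (t : ℝ), 0 ≤ t → ∀ x, Integrable (fun ξ => g x ξ t * ‖ξ‖ ^ 2) ∧
      ∫ ξ, g x ξ t * ‖ξ‖ ^ 2 = 0)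
    -- finiteness of mass, energy and second moments at every time
    (hf_int : ∀ (t : ℝ), 0 ≤ t →
      Integrable (fun p : EuclideanSpace ℝ (Fin n) × EuclideanSpace ℝ (Fin n) =>
        f p.1 p.2 t * (1 + ‖p.1‖ ^ 2 + ‖p.2‖ ^ 2)))
    -- integrability of the interaction along characteristics with second moments
    (hg_char_int : ∀ T : ℝ, 0 < T →
      Integrable (fun q : (EuclideanSpace ℝ (Fin n) × EuclideanSpace ℝ (Fin n)) × ℝ =>
        |g (q.1.1 + q.2 • q.1.2) q.1.2 q.2| * (1 + ‖q.1.1‖ ^ 2 + ‖q.1.2‖ ^ 2))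
        ((volume : Measure (EuclideanSpace ℝ (Fin n) × EuclideanSpace ℝ (Fin n))).prod
          (volume.restrict (Icc (0:ℝ) T))))
    -- the total energy
    (Energy : ℝ)
    (hE : Energy = ∫ p : EuclideanSpace ℝ (Fin n) × EuclideanSpace ℝ (Fin n),
      f p.1 p.2 0 * ‖p.2‖ ^ 2)
    -- localization of mass at time zero
    (hf_loc : Integrable (fun p : EuclideanSpace ℝ (Fin n) × EuclideanSpace ℝ (Fin n) =>
      f p.1 p.2 0 * ‖p.1‖ ^ 2)) :
    ∀ (t : ℝ), 0 ≤ t →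
      ((∫ p : EuclideanSpace ℝ (Fin n) × EuclideanSpace ℝ (Fin n), f p.1 p.2 0 * ⟪p.1, p.2⟫)
          + t * Energy
        ≤ ∫ p : EuclideanSpace ℝ (Fin n) × EuclideanSpace ℝ (Fin n),
            f p.1 p.2 t * (‖p.1‖ * ‖p.2‖))
      ∧ (∫ p : EuclideanSpace ℝ (Fin n) × EuclideanSpace ℝ (Fin n),
            f p.1 p.2 t * (‖p.1‖ * ‖p.2‖))
        ≤ (∫ p : EuclideanSpace ℝ (Fin n) × EuclideanSpace ℝ (Fin n),
            f p.1 p.2 0 * (‖p.1‖ ^ 2 + ‖p.2‖ ^ 2)) + t * Energy := by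
  intro t ht
  have hnx : ∀ x : EuclideanSpace ℝ (Fin n), 0 ≤ ‖x‖ := norm_nonneg
  have hinner_int : ∀ s, 0 ≤ s → ∀ x, Integrable (fun ξ => g x ξ s * ⟪x, ξ⟫) := by
    intro s hs x
    simpa [inner_smul_right] using (hmeso_mom s hs x).1.const_inner (𝕜 := ℝ) x
  have hinner : ∀ s, 0 ≤ s → ∀ x, ∫ ξ, g x ξ s * ⟪x, ξ⟫ = 0 := by
    intro s hs x
    have h := integral_inner (𝕜 := ℝ) (hmeso_mom s hs x).1 x
    rw [(hmeso_mom s hs x).2, inner_zero_right] at h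
    simpa [inner_smul_right] using h
  have key := moment_conserved f g hf_meas hg_meas t ht (fun x ξ => h_mild x ξ t ht)
    (hf_int 0 le_rfl) (hg_char_int t)
  obtain ⟨hE0, hEt, hEeq⟩ := key (fun _ ξ => ‖ξ‖ ^ 2) (by fun_prop)
    (fun x ξ => by rw [abs_of_nonneg (by positivity)]; nlinarith [sq_nonneg ‖x‖])
    (fun s hs x => (hmeso_en s hs x).2)
  obtain ⟨hX0, hXt, hXeq⟩ := key (fun x _ => ‖x‖ ^ 2) (by fun_prop)
    (fun x ξ => by rw [abs_of_nonneg (by positivity)]; nlinarith [sq_nonneg ‖ξ‖])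
    (fun s hs x => by
      have hexp : ∀ ξ, g x ξ s * ‖x - s • ξ‖ ^ 2 =
          g x ξ s * ‖x‖ ^ 2 - (2 * s) * (g x ξ s * ⟪x, ξ⟫) + s ^ 2 * (g x ξ s * ‖ξ‖ ^ 2) := by
        intro ξ
        rw [norm_sub_sq_real, inner_smul_right, norm_smul, mul_pow, norm_eq_abs, sq_abs]
        ring
      have h1 := (hmeso_mass s hs x).1.mul_const (‖x‖ ^ 2)
      have h2 := (hinner_int s hs x).const_mul (2 * s)
      have h3 := (hmeso_en s hs x).1.const_mul (s ^ 2)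
      have h12 : Integrable fun ξ => g x ξ s * ‖x‖ ^ 2 - (2 * s) * (g x ξ s * ⟪x, ξ⟫) :=
        h1.sub h2
      simp_rw [hexp]
      rw [integral_add h12 h3, integral_sub h1 h2, integral_mul_const,
        integral_const_mul, integral_const_mul, (hmeso_mass s hs x).2, hinner s hs x,
        (hmeso_en s hs x).2]
      ring)
  obtain ⟨hA0, hAt, hAeq⟩ := key (fun x ξ => ⟪x, ξ⟫) (by fun_prop)
    (fun x ξ => (abs_real_inner_le_norm x ξ).trans
      (by nlinarith [sq_nonneg (‖x‖ - ‖ξ‖), sq_nonneg ‖x‖, sq_nonneg ‖ξ‖]))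
    (fun s hs x => by
      have hexp : ∀ ξ, g x ξ s * ⟪x - s • ξ, ξ⟫ =
          g x ξ s * ⟪x, ξ⟫ - s * (g x ξ s * ‖ξ‖ ^ 2) := by
        intro ξ
        rw [inner_sub_left, real_inner_smul_left, real_inner_self_eq_norm_sq]
        ring
      simp_rw [hexp]
      rw [integral_sub (hinner_int s hs x) ((hmeso_en s hs x).1.const_mul s),
        integral_const_mul, hinner s hs x, (hmeso_en s hs x).2]
      ring)
  have hft_meas : Measurable fun p : EuclideanSpace ℝ (Fin n) × EuclideanSpace ℝ (Fin n) =>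
      f p.1 p.2 t := hf_meas.comp (measurable_id.prodMk measurable_const)
  have hw_meas : Measurable fun p : EuclideanSpace ℝ (Fin n) × EuclideanSpace ℝ (Fin n) =>
      f p.1 p.2 t * (‖p.1‖ * ‖p.2‖) := hft_meas.mul (by fun_prop)
  have hU : ∫ p : EuclideanSpace ℝ (Fin n) × EuclideanSpace ℝ (Fin n),
      f p.1 p.2 t * (‖p.1‖ * ‖p.2‖) =
      ∫ p : EuclideanSpace ℝ (Fin n) × EuclideanSpace ℝ (Fin n),
        f (p.1 + t • p.2) p.2 t * (‖p.1 + t • p.2‖ * ‖p.2‖) := by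
    conv_lhs => rw [← (measurePreserving_shear_s3 t).map_eq]
    exact integral_map (measurePreserving_shear_s3 t).measurable.aemeasurable
      hw_meas.aestronglyMeasurable
  -- `|y + tξ| |ξ| ≤ |y| |ξ| + t |ξ|²`, and `|y| |ξ| ≤ |y|² + |ξ|²`.
  have hub : ∀ p : EuclideanSpace ℝ (Fin n) × EuclideanSpace ℝ (Fin n),
      f (p.1 + t • p.2) p.2 t * (‖p.1 + t • p.2‖ * ‖p.2‖) ≤
      f (p.1 + t • p.2) p.2 t * ‖p.1‖ ^ 2 + f (p.1 + t • p.2) p.2 t * ‖p.2‖ ^ 2 +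
        t * (f (p.1 + t • p.2) p.2 t * ‖p.2‖ ^ 2) := by
    intro p
    have h1 : ‖p.1 + t • p.2‖ ≤ ‖p.1‖ + t * ‖p.2‖ := by
      simpa [norm_smul, abs_of_nonneg ht] using norm_add_le p.1 (t • p.2)
    have h2 : ‖p.1 + t • p.2‖ * ‖p.2‖ ≤ ‖p.1‖ ^ 2 + ‖p.2‖ ^ 2 + t * ‖p.2‖ ^ 2 := by
      nlinarith [mul_le_mul_of_nonneg_right h1 (hnx p.2), sq_nonneg (‖p.1‖ - ‖p.2‖),
        sq_nonneg ‖p.1‖, sq_nonneg ‖p.2‖]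
    linarith [mul_le_mul_of_nonneg_left h2 (hf_nonneg (p.1 + t • p.2) p.2 t ht)]
  have hlb : ∀ p : EuclideanSpace ℝ (Fin n) × EuclideanSpace ℝ (Fin n),
      f (p.1 + t • p.2) p.2 t * ⟪p.1, p.2⟫ + t * (f (p.1 + t • p.2) p.2 t * ‖p.2‖ ^ 2) ≤
      f (p.1 + t • p.2) p.2 t * (‖p.1 + t • p.2‖ * ‖p.2‖) := by
    intro p
    have h1 := real_inner_le_norm (p.1 + t • p.2) p.2
    rw [inner_add_left, real_inner_smul_left, real_inner_self_eq_norm_sq] at h1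
    linarith [mul_le_mul_of_nonneg_left h1 (hf_nonneg (p.1 + t • p.2) p.2 t ht)]
  have hUint : Integrable fun p : EuclideanSpace ℝ (Fin n) × EuclideanSpace ℝ (Fin n) =>
      f (p.1 + t • p.2) p.2 t * (‖p.1 + t • p.2‖ * ‖p.2‖) := by
    refine ((hXt.add hEt).add (hEt.const_mul t)).mono'
      (hw_meas.comp (measurePreserving_shear_s3 t).measurable).aestronglyMeasurable
      (Eventually.of_forall fun p => ?_)
    rw [norm_eq_abs, abs_of_nonneg
      (mul_nonneg (hf_nonneg _ _ t ht) (mul_nonneg (norm_nonneg _) (norm_nonneg _)))]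
    exact hub p
  rw [hU, hE]
  constructor
  · rw [← hAeq, ← hEeq, ← integral_const_mul, ← integral_add hAt (hEt.const_mul t)]
    exact integral_mono (hAt.add (hEt.const_mul t)) hUint hlb
  · simp_rw [mul_add]
    rw [integral_add hX0 hE0, ← hXeq, ← hEeq, ← integral_const_mul, ← integral_add hXt hEt,
      ← integral_add (hXt.fun_add hEt) (hEt.const_mul t)]
    exact integral_mono hUint ((hXt.add hEt).add (hEt.const_mul t)) hub
end
end

section
/- (Morawetz-type estimate) For every x₀ ∈ ℝⁿ the following space-time integral is finite: ∫₀^∞ ∬_{ℝⁿ×ℝⁿ} (1/|x−x₀|) |ξ|² sin²θ(x−x₀,ξ) f(x,ξ,t) dx dξ dt < ∞, where for nonzero vectors u, w, θ(u,w) denotes the angle between them, so that |ξ|² sin²θ(x−x₀,ξ)/|x−x₀| = (|x−x₀|²|ξ|² − ((x−x₀)·ξ)²)/|x−x₀|³. -/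
open MeasureTheory Real Filter Set
open scoped RealInnerProductSpace ENNReal

noncomputable section

/-!
The multiplier is the radial momentum `Φ(x, ξ) = ⟪x - x₀, ξ⟫ / |x - x₀|`. Along free transport
`x ↦ x + tξ` it is nondecreasing, with derivative exactly the Morawetz kernel
`(|y|²|ξ|² - ⟪y, ξ⟫²) / |y|³`, `y = x + tξ - x₀`. Since `Φ` is linear in `ξ`, the momentum law of
the interaction gives `∫ Φ g dξ = 0`, so `∬ Φ f` changes only through transport, and over `[0, T]`
the space-time integral of kernel times `f` equals `∬ Φ f(T) - ∬ Φ f(0)`. As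
`|Φ| ≤ |ξ| ≤ 1 + |ξ|²`, conservation of mass plus energy bounds this by `2 ∬ (1 + |ξ|²) f(0)`,
uniformly in `T`.

The singularity at `x = x₀` is removed by replacing `|y|` with `√(|y|² + ε²)` (`radial`,
`radialKer`). `regularized_bound` is the estimate for fixed `ε` and `T`, uniform in both; Fatou's
lemma with `ε = 1/(N+1)`, `T = N+1` then gives the claim. The cancellations of `g`
against `Φ` and against `1 + |ξ|²` are both `flow_balance`, and the integration by parts in time is `by_parts`.
-/

/-! ### The regularized multiplier -/

/-- The regularized radial momentum `⟪y, ξ⟫ / √(|y|² + ε²)`. -/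
def radial {n : ℕ} (ε : ℝ) (y ξ : EuclideanSpace ℝ (Fin n)) : ℝ :=
  ⟪y, ξ⟫ / √(‖y‖ ^ 2 + ε ^ 2)

/-- The derivative of `radial ε` in the transport direction, `d/dt radial ε (y + tξ) ξ` at
`t = 0`, for `ε ≠ 0`. -/
def radialKer {n : ℕ} (ε : ℝ) (y ξ : EuclideanSpace ℝ (Fin n)) : ℝ :=
  (‖ξ‖ ^ 2 * (‖y‖ ^ 2 + ε ^ 2) - ⟪y, ξ⟫ ^ 2) / √(‖y‖ ^ 2 + ε ^ 2) ^ 3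

lemma radial_abs_le {n : ℕ} {ε : ℝ} (hε : 0 < ε) (y ξ : EuclideanSpace ℝ (Fin n)) :
    |radial ε y ξ| ≤ 1 + ‖ξ‖ ^ 2 := by
  have hD : 0 < √(‖y‖ ^ 2 + ε ^ 2) := Real.sqrt_pos.2 (by positivity)
  have h1 : ‖y‖ ≤ √(‖y‖ ^ 2 + ε ^ 2) := Real.le_sqrt_of_sq_le (by nlinarith)
  have h2 : |radial ε y ξ| ≤ ‖ξ‖ := by
    rw [radial, abs_div, abs_of_pos hD, div_le_iff₀ hD]
    calc |⟪y, ξ⟫| ≤ ‖y‖ * ‖ξ‖ := abs_real_inner_le_norm _ _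
      _ ≤ √(‖y‖ ^ 2 + ε ^ 2) * ‖ξ‖ := by gcongr
      _ = _ := mul_comm _ _
  nlinarith [sq_nonneg (‖ξ‖ - 1)]

lemma radialKer_nonneg {n : ℕ} (ε : ℝ) (y ξ : EuclideanSpace ℝ (Fin n)) :
    0 ≤ radialKer ε y ξ := by
  have h1 := abs_real_inner_le_norm y ξ
  have h2 : ⟪y, ξ⟫ ^ 2 ≤ (‖y‖ * ‖ξ‖) ^ 2 := by
    rw [← sq_abs]; gcongr
  apply div_nonneg _ (by positivity)
  nlinarith [sq_nonneg (‖ξ‖ * ε)]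

lemma continuous_radial {n : ℕ} {ε : ℝ} (hε : 0 < ε) :
    Continuous fun p : EuclideanSpace ℝ (Fin n) × EuclideanSpace ℝ (Fin n) =>
      radial ε p.1 p.2 := by
  unfold radial
  refine Continuous.div (by fun_prop) (by fun_prop) fun p => ?_
  exact (Real.sqrt_pos.2 (by positivity)).ne'

lemma continuous_radialKer {n : ℕ} {ε : ℝ} (hε : 0 < ε) :
    Continuous fun p : EuclideanSpace ℝ (Fin n) × EuclideanSpace ℝ (Fin n) =>
      radialKer ε p.1 p.2 := by
  unfold radialKer
  refine Continuous.div (by fun_prop) (by fun_prop) fun p => ?_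
  exact (pow_pos (Real.sqrt_pos.2 (by positivity)) 3).ne'

lemma hasDerivAt_radial {n : ℕ} {ε : ℝ} (hε : 0 < ε) (y ξ : EuclideanSpace ℝ (Fin n)) (t : ℝ) :
    HasDerivAt (fun t : ℝ => radial ε (y + t • ξ) ξ) (radialKer ε (y + t • ξ) ξ) t := by
  have hy : HasDerivAt (fun t : ℝ => y + t • ξ) ξ t := by
    simpa using ((hasDerivAt_id t).smul_const ξ).const_add y
  have h1 : HasDerivAt (fun t : ℝ => ⟪y + t • ξ, ξ⟫) (‖ξ‖ ^ 2) t := by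
    have := hy.inner ℝ (hasDerivAt_const t ξ)
    simpa [real_inner_self_eq_norm_sq] using this
  have h2 : HasDerivAt (fun t : ℝ => ‖y + t • ξ‖ ^ 2 + ε ^ 2) (2 * ⟪y + t • ξ, ξ⟫) t :=
    hy.norm_sq.add_const _
  have hpos : 0 < ‖y + t • ξ‖ ^ 2 + ε ^ 2 := by positivity
  have hD : 0 < √(‖y + t • ξ‖ ^ 2 + ε ^ 2) := Real.sqrt_pos.2 hpos
  have h3 := h1.div (h2.sqrt hpos.ne') hD.ne'
  refine h3.congr_deriv ?_
  unfold radialKer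
  have hsq := Real.sq_sqrt hpos.le
  rw [div_eq_div_iff (by positivity) (by positivity)]
  rw [← hsq]
  simp only [Real.sqrt_sq hD.le]
  field_simp

/-! ### Transport along characteristics -/

/-- The flow of free transport preserves Lebesgue measure on phase space. -/
lemma measurePreserving_transport {n : ℕ} (s : ℝ) :
    MeasurePreserving (fun p : EuclideanSpace ℝ (Fin n) × EuclideanSpace ℝ (Fin n) =>
      (p.1 + s • p.2, p.2)) := by
  have h : MeasurePreserving (fun p : EuclideanSpace ℝ (Fin n) × EuclideanSpace ℝ (Fin n) =>
      (p.1, p.2 + s • p.1)) (volume.prod volume) (volume.prod volume) :=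
    MeasurePreserving.skew_product (g := fun ξ x => x + s • ξ) (MeasurePreserving.id volume)
      (by unfold Function.uncurry; fun_prop)
      (Eventually.of_forall fun ξ => map_add_right_eq_self volume (s • ξ))
  exact (Measure.measurePreserving_swap.comp h).comp Measure.measurePreserving_swap

lemma integral_comp_transport {n : ℕ} (s : ℝ)
    {h : EuclideanSpace ℝ (Fin n) × EuclideanSpace ℝ (Fin n) → ℝ} (hm : Measurable h) :
    ∫ p : EuclideanSpace ℝ (Fin n) × EuclideanSpace ℝ (Fin n), h (p.1 + s • p.2, p.2)
      = ∫ p, h p := by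
  have hmp := measurePreserving_transport (n := n) s
  conv_rhs => rw [← hmp.map_eq]
  rw [integral_map hmp.measurable.aemeasurable hm.aestronglyMeasurable]

/-- Integration by parts in time, where `F` is only assumed to be a primitive of an integrable
function `G` in the sense of mild solutions. -/
lemma by_parts {φ φ' F G : ℝ → ℝ} {T : ℝ} (hT : 0 ≤ T)
    (hφ : ∀ t, HasDerivAt φ (φ' t) t) (hφ' : Continuous φ')
    (hG : IntegrableOn G (Icc 0 T))
    (hF : ∀ t, 0 ≤ t → F t = F 0 + ∫ s in Icc 0 t, G s) :
    ∫ t in Icc 0 T, φ' t * F t = φ T * F T - φ 0 * F 0 - ∫ s in Icc 0 T, φ s * G s := by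
  have hGi : IntervalIntegrable G volume 0 T := by
    rwa [intervalIntegrable_iff_integrableOn_Icc_of_le hT]
  set H : ℝ → ℝ := fun t => ∫ s in (0:ℝ)..t, G s with hH
  have hFH : ∀ t, 0 ≤ t → F t = F 0 + H t := fun t ht => by
    simp only [hH]
    rw [hF t ht, intervalIntegral.integral_of_le ht, integral_Icc_eq_integral_Ioc]
  have hHac : AbsolutelyContinuousOnInterval H 0 T :=
    hGi.absolutelyContinuousOnInterval_intervalIntegral (by simp)
  have hφi : IntervalIntegrable φ' volume 0 T := hφ'.intervalIntegrable _ _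
  have hφint : ∀ t, φ t - φ 0 = ∫ s in (0:ℝ)..t, φ' s := fun t =>
    (intervalIntegral.integral_eq_sub_of_hasDerivAt (fun x _ => hφ x)
      (hφ'.intervalIntegrable _ _)).symm
  -- `φ` is shifted by `φ 0`, so that it becomes the integral of `φ'` from `0`
  have hφac : AbsolutelyContinuousOnInterval (fun t => φ t - φ 0) 0 T := by
    rw [funext hφint]
    exact hφi.absolutelyContinuousOnInterval_intervalIntegral (by simp)
  have key := hφac.integral_mul_deriv_eq_deriv_mul hHac
  have hdφ : ∀ t, deriv (fun t => φ t - φ 0) t = φ' t := fun t => ((hφ t).sub_const _).deriv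
  have hdH : ∫ x in (0:ℝ)..T, (φ x - φ 0) * deriv H x = ∫ x in (0:ℝ)..T, (φ x - φ 0) * G x := by
    apply intervalIntegral.integral_congr_ae
    filter_upwards [hGi.ae_hasDerivAt_integral] with x hx hx'
    rw [(hx (uIoc_subset_uIcc hx') 0 (by simp)).deriv]
  have hφc : Continuous φ := continuous_iff_continuousAt.2 fun t => (hφ t).continuousAt
  rw [hdH] at key
  simp only [hdφ] at key
  have e1 : ∫ x in (0:ℝ)..T, (φ x - φ 0) * G x = (∫ x in (0:ℝ)..T, φ x * G x) - φ 0 * H T := by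
    simp only [sub_mul]
    rw [intervalIntegral.integral_sub (hGi.continuousOn_mul hφc.continuousOn)
      (hGi.const_mul _), intervalIntegral.integral_const_mul]
  have e2 : ∫ t in Icc 0 T, φ' t * F t = F 0 * (φ T - φ 0) + ∫ x in (0:ℝ)..T, φ' x * H x := by
    rw [integral_Icc_eq_integral_Ioc, ← intervalIntegral.integral_of_le hT]
    rw [hφint, ← intervalIntegral.integral_const_mul, ← intervalIntegral.integral_add
      (hφi.const_mul _) (hφi.mul_continuousOn hHac.continuousOn)]
    apply intervalIntegral.integral_congr
    intro x hx
    rw [uIcc_of_le hT] at hx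
    simp only [hFH x hx.1]
    ring
  have e3 : ∫ s in Icc 0 T, φ s * G s = ∫ x in (0:ℝ)..T, φ x * G x := by
    rw [integral_Icc_eq_integral_Ioc, ← intervalIntegral.integral_of_le hT]
  have hH0 : H 0 = 0 := by simp [hH]
  rw [e2, e3, hFH T hT]
  rw [e1, hH0] at key
  linarith

/-- A weight `w` that the interaction annihilates pointwise in space, and that is
dominated by mass plus energy, receives no net contribution from the interaction along
characteristics. -/
lemma flow_balance {n : ℕ} (g : EuclideanSpace ℝ (Fin n) → EuclideanSpace ℝ (Fin n) → ℝ → ℝ)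
    (hg_meas : Measurable fun p : (EuclideanSpace ℝ (Fin n) × EuclideanSpace ℝ (Fin n)) × ℝ =>
      g p.1.1 p.1.2 p.2) {T : ℝ}
    (hg_int : Integrable (fun q : (EuclideanSpace ℝ (Fin n) × EuclideanSpace ℝ (Fin n)) × ℝ =>
        |g (q.1.1 + q.2 • q.1.2) q.1.2 q.2| * (1 + ‖q.1.1‖ ^ 2 + ‖q.1.2‖ ^ 2))
        ((volume : Measure (EuclideanSpace ℝ (Fin n) × EuclideanSpace ℝ (Fin n))).prod
          (volume.restrict (Icc (0:ℝ) T))))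
    (w : EuclideanSpace ℝ (Fin n) → EuclideanSpace ℝ (Fin n) → ℝ)
    (hw : Measurable fun p : EuclideanSpace ℝ (Fin n) × EuclideanSpace ℝ (Fin n) => w p.1 p.2)
    (hwb : ∀ y ξ, |w y ξ| ≤ 1 + ‖ξ‖ ^ 2)
    (hw0 : ∀ s, 0 ≤ s → ∀ y, ∫ ξ, w y ξ * g y ξ s = 0) :
    Integrable (fun q : (EuclideanSpace ℝ (Fin n) × EuclideanSpace ℝ (Fin n)) × ℝ =>
        w (q.1.1 + q.2 • q.1.2) q.1.2 * g (q.1.1 + q.2 • q.1.2) q.1.2 q.2)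
        ((volume : Measure (EuclideanSpace ℝ (Fin n) × EuclideanSpace ℝ (Fin n))).prod
          (volume.restrict (Icc (0:ℝ) T))) ∧
    ∫ p : EuclideanSpace ℝ (Fin n) × EuclideanSpace ℝ (Fin n), ∫ s in Icc (0:ℝ) T,
      w (p.1 + s • p.2) p.2 * g (p.1 + s • p.2) p.2 s = 0 := by
  have hm : Measurable (fun q : (EuclideanSpace ℝ (Fin n) × EuclideanSpace ℝ (Fin n)) × ℝ =>
      w (q.1.1 + q.2 • q.1.2) q.1.2 * g (q.1.1 + q.2 • q.1.2) q.1.2 q.2) := by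
    have h1 : Measurable fun q : (EuclideanSpace ℝ (Fin n) × EuclideanSpace ℝ (Fin n)) × ℝ =>
      (q.1.1 + q.2 • q.1.2, q.1.2) := by fun_prop
    exact (hw.comp h1).mul (hg_meas.comp (h1.prodMk measurable_snd))
  have hint : Integrable (fun q : (EuclideanSpace ℝ (Fin n) × EuclideanSpace ℝ (Fin n)) × ℝ =>
        w (q.1.1 + q.2 • q.1.2) q.1.2 * g (q.1.1 + q.2 • q.1.2) q.1.2 q.2)
        ((volume : Measure (EuclideanSpace ℝ (Fin n) × EuclideanSpace ℝ (Fin n))).prod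
          (volume.restrict (Icc (0:ℝ) T))) := by
    refine hg_int.mono' hm.aestronglyMeasurable (Eventually.of_forall fun q => ?_)
    rw [Real.norm_eq_abs, abs_mul, mul_comm]
    have := hwb (q.1.1 + q.2 • q.1.2) q.1.2
    gcongr
    nlinarith [sq_nonneg ‖q.1.1‖]
  refine ⟨hint, ?_⟩
  rw [← integral_prod _ hint, integral_prod_symm _ hint]
  refine setIntegral_eq_zero_of_forall_eq_zero fun s hs => ?_
  have hHm : Measurable fun p : EuclideanSpace ℝ (Fin n) × EuclideanSpace ℝ (Fin n) =>
      w p.1 p.2 * g p.1 p.2 s :=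
    hw.mul (hg_meas.comp (measurable_id.prodMk measurable_const))
  refine (integral_comp_transport s hHm).trans ?_
  by_cases hi : Integrable fun p : EuclideanSpace ℝ (Fin n) × EuclideanSpace ℝ (Fin n) =>
      w p.1 p.2 * g p.1 p.2 s
  · rw [Measure.volume_eq_prod] at hi ⊢
    rw [integral_prod _ hi]
    simp [hw0 s hs.1]
  · exact integral_undef hi

/-! ### The regularized estimate -/

lemma integrable_weighted {n : ℕ}
    {h : EuclideanSpace ℝ (Fin n) × EuclideanSpace ℝ (Fin n) → ℝ} (hm : Measurable h)
    (hi : Integrable fun p => h p * (1 + ‖p.1‖ ^ 2 + ‖p.2‖ ^ 2))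
    {w : EuclideanSpace ℝ (Fin n) × EuclideanSpace ℝ (Fin n) → ℝ} (hw : Measurable w)
    (hwb : ∀ p, |w p| ≤ 1 + ‖p.2‖ ^ 2) :
    Integrable fun p => w p * h p := by
  refine hi.norm.mono' (hw.mul hm).aestronglyMeasurable (Eventually.of_forall fun p => ?_)
  have h1 : 0 ≤ 1 + ‖p.1‖ ^ 2 + ‖p.2‖ ^ 2 := by positivity
  rw [norm_mul, norm_mul, mul_comm, Real.norm_eq_abs (w p), Real.norm_of_nonneg h1]
  gcongr
  have := hwb p
  nlinarith [sq_nonneg ‖p.1‖]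

/-- The Morawetz estimate for the regularized kernel on a bounded time interval, with a bound
independent of the regularization `ε` and of the final time `T`. -/
lemma regularized_bound {n : ℕ}
    (f g : EuclideanSpace ℝ (Fin n) → EuclideanSpace ℝ (Fin n) → ℝ → ℝ)
    (hf_nonneg : ∀ x ξ t, (0:ℝ) ≤ t → 0 ≤ f x ξ t)
    (hf_cont : Continuous fun p : (EuclideanSpace ℝ (Fin n) × EuclideanSpace ℝ (Fin n)) × ℝ =>
      f p.1.1 p.1.2 p.2)
    (hg_meas : Measurable fun p : (EuclideanSpace ℝ (Fin n) × EuclideanSpace ℝ (Fin n)) × ℝ =>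
      g p.1.1 p.1.2 p.2)
    (h_mild : ∀ (x ξ : EuclideanSpace ℝ (Fin n)) (t : ℝ), 0 ≤ t →
      f (x + t • ξ) ξ t = f x ξ 0 + ∫ s in Icc (0:ℝ) t, g (x + s • ξ) ξ s)
    (hmeso_mass : ∀ (t : ℝ), 0 ≤ t → ∀ x, Integrable (fun ξ => g x ξ t) ∧ ∫ ξ, g x ξ t = 0)
    (hmeso_mom : ∀ (t : ℝ), 0 ≤ t → ∀ x, Integrable (fun ξ => g x ξ t • ξ) ∧
      ∫ ξ, g x ξ t • ξ = (0 : EuclideanSpace ℝ (Fin n)))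
    (hmeso_en : ∀ (t : ℝ), 0 ≤ t → ∀ x, Integrable (fun ξ => g x ξ t * ‖ξ‖ ^ 2) ∧
      ∫ ξ, g x ξ t * ‖ξ‖ ^ 2 = 0)
    (hf_int : ∀ (t : ℝ), 0 ≤ t →
      Integrable (fun p : EuclideanSpace ℝ (Fin n) × EuclideanSpace ℝ (Fin n) =>
        f p.1 p.2 t * (1 + ‖p.1‖ ^ 2 + ‖p.2‖ ^ 2)))
    {T : ℝ} (hT : 0 ≤ T)
    (hg_int : Integrable (fun q : (EuclideanSpace ℝ (Fin n) × EuclideanSpace ℝ (Fin n)) × ℝ =>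
        |g (q.1.1 + q.2 • q.1.2) q.1.2 q.2| * (1 + ‖q.1.1‖ ^ 2 + ‖q.1.2‖ ^ 2))
        ((volume : Measure (EuclideanSpace ℝ (Fin n) × EuclideanSpace ℝ (Fin n))).prod
          (volume.restrict (Icc (0:ℝ) T))))
    (x₀ : EuclideanSpace ℝ (Fin n)) {ε : ℝ} (hε : 0 < ε) :
    ∫⁻ t in Icc (0:ℝ) T, ∫⁻ p : EuclideanSpace ℝ (Fin n) × EuclideanSpace ℝ (Fin n),
        ENNReal.ofReal (radialKer ε (p.1 - x₀) p.2 * f p.1 p.2 t) ≤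
      ENNReal.ofReal (2 * ∫ p : EuclideanSpace ℝ (Fin n) × EuclideanSpace ℝ (Fin n),
        (1 + ‖p.2‖ ^ 2) * f p.1 p.2 0) := by
  have hft : ∀ t, Measurable fun p : EuclideanSpace ℝ (Fin n) × EuclideanSpace ℝ (Fin n) =>
      f p.1 p.2 t := fun t =>
    hf_cont.measurable.comp (measurable_id.prodMk measurable_const)
  have hcm : Measurable fun p : EuclideanSpace ℝ (Fin n) × EuclideanSpace ℝ (Fin n) =>
      1 + ‖p.2‖ ^ 2 := by fun_prop
  have hcb : ∀ ξ : EuclideanSpace ℝ (Fin n), |1 + ‖ξ‖ ^ 2| ≤ 1 + ‖ξ‖ ^ 2 := fun ξ =>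
    (abs_of_nonneg (by positivity)).le
  have hrm : Measurable fun p : EuclideanSpace ℝ (Fin n) × EuclideanSpace ℝ (Fin n) =>
      radial ε (p.1 - x₀) p.2 :=
    ((continuous_radial hε).comp (by fun_prop : Continuous fun p : EuclideanSpace ℝ (Fin n) ×
      EuclideanSpace ℝ (Fin n) => (p.1 - x₀, p.2))).measurable
  have hc_int : ∀ t, 0 ≤ t → Integrable fun p : EuclideanSpace ℝ (Fin n) ×
      EuclideanSpace ℝ (Fin n) => (1 + ‖p.2‖ ^ 2) * f p.1 p.2 t := fun t ht =>
    integrable_weighted (hft t) (hf_int t ht) hcm fun p => hcb p.2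
  have hr_int : ∀ t, 0 ≤ t → Integrable fun p : EuclideanSpace ℝ (Fin n) ×
      EuclideanSpace ℝ (Fin n) => radial ε (p.1 - x₀) p.2 * f p.1 p.2 t := fun t ht =>
    integrable_weighted (hft t) (hf_int t ht) hrm fun p => radial_abs_le hε _ _
  -- mass plus energy, and radial momentum, are not produced by the interaction
  obtain ⟨hcG_int, hcG⟩ := flow_balance g hg_meas hg_int (fun _ ξ => 1 + ‖ξ‖ ^ 2) hcm
    (fun _ ξ => hcb ξ) (fun s hs y => by
      have h1 := hmeso_mass s hs y
      have h2 := hmeso_en s hs y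
      have : ∀ ξ, (1 + ‖ξ‖ ^ 2) * g y ξ s = g y ξ s + g y ξ s * ‖ξ‖ ^ 2 := fun ξ => by ring
      simp only [this]
      rw [integral_add h1.1 h2.1, h1.2, h2.2, add_zero])
  obtain ⟨hrG_int, hrG⟩ := flow_balance g hg_meas hg_int (fun y ξ => radial ε (y - x₀) ξ) hrm
    (fun _ ξ => radial_abs_le hε _ _) (fun s hs y => by
      have h1 := hmeso_mom s hs y
      have : ∀ ξ, radial ε (y - x₀) ξ * g y ξ s
          = (√(‖y - x₀‖ ^ 2 + ε ^ 2))⁻¹ * ⟪y - x₀, g y ξ s • ξ⟫ := fun ξ => by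
        rw [radial, real_inner_smul_right]; ring
      simp only [this]
      rw [integral_const_mul, integral_inner h1.1, h1.2, inner_zero_right, mul_zero])
  -- conservation of mass plus energy between times `0` and `T`
  have hcons : ∫ p : EuclideanSpace ℝ (Fin n) × EuclideanSpace ℝ (Fin n),
      (1 + ‖p.2‖ ^ 2) * f p.1 p.2 T = ∫ p : EuclideanSpace ℝ (Fin n) × EuclideanSpace ℝ (Fin n),
      (1 + ‖p.2‖ ^ 2) * f p.1 p.2 0 := by
    refine (integral_comp_transport T (hcm.mul (hft T))).symm.trans ?_
    change ∫ p : EuclideanSpace ℝ (Fin n) × EuclideanSpace ℝ (Fin n),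
      (1 + ‖p.2‖ ^ 2) * f (p.1 + T • p.2) p.2 T = _
    have : ∀ p : EuclideanSpace ℝ (Fin n) × EuclideanSpace ℝ (Fin n),
        (1 + ‖p.2‖ ^ 2) * f (p.1 + T • p.2) p.2 T = (1 + ‖p.2‖ ^ 2) * f p.1 p.2 0
          + ∫ s in Icc (0:ℝ) T, (1 + ‖p.2‖ ^ 2) * g (p.1 + s • p.2) p.2 s := fun p => by
      rw [h_mild p.1 p.2 T hT, integral_const_mul]; ring
    simp only [this]
    rw [integral_add (hc_int 0 le_rfl) hcG_int.integral_prod_left, hcG, add_zero]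
  have hbd : ∀ t, 0 ≤ t → |∫ p : EuclideanSpace ℝ (Fin n) × EuclideanSpace ℝ (Fin n),
      radial ε (p.1 - x₀) p.2 * f p.1 p.2 t| ≤
      ∫ p : EuclideanSpace ℝ (Fin n) × EuclideanSpace ℝ (Fin n),
        (1 + ‖p.2‖ ^ 2) * f p.1 p.2 t := fun t ht => by
    refine (abs_integral_le_integral_abs).trans
      (integral_mono (hr_int t ht).abs (hc_int t ht) fun p => ?_)
    have h0 := hf_nonneg p.1 p.2 t ht
    simp only [abs_mul, abs_of_nonneg h0]
    gcongr
    exact radial_abs_le hε _ _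
  -- the increment of radial momentum along the characteristic starting at `p`
  set h : EuclideanSpace ℝ (Fin n) × EuclideanSpace ℝ (Fin n) → ℝ := fun p =>
    radial ε (p.1 + T • p.2 - x₀) p.2 * f (p.1 + T • p.2) p.2 T
      - radial ε (p.1 - x₀) p.2 * f p.1 p.2 0
      - ∫ s in Icc (0:ℝ) T, radial ε (p.1 + s • p.2 - x₀) p.2 * g (p.1 + s • p.2) p.2 s with hh
  have hrT_int : Integrable fun p : EuclideanSpace ℝ (Fin n) × EuclideanSpace ℝ (Fin n) =>
      radial ε (p.1 + T • p.2 - x₀) p.2 * f (p.1 + T • p.2) p.2 T :=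
    (measurePreserving_transport T).integrable_comp_of_integrable (hr_int T hT)
  have hh_int : Integrable h :=
    (hrT_int.sub (hr_int 0 le_rfl)).sub hrG_int.integral_prod_left
  have hh_eq : ∫ p, h p = (∫ p : EuclideanSpace ℝ (Fin n) × EuclideanSpace ℝ (Fin n),
      radial ε (p.1 - x₀) p.2 * f p.1 p.2 T) - ∫ p : EuclideanSpace ℝ (Fin n) ×
      EuclideanSpace ℝ (Fin n), radial ε (p.1 - x₀) p.2 * f p.1 p.2 0 := by
    refine (integral_sub (hrT_int.sub (hr_int 0 le_rfl)) hrG_int.integral_prod_left).trans ?_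
    refine (congrArg₂ (· - ·) (integral_sub hrT_int (hr_int 0 le_rfl)) hrG).trans ?_
    refine (sub_zero _).trans (congrArg₂ (· - ·) ?_ rfl)
    exact integral_comp_transport T (hrm.mul (hft T))
  have hker : Continuous fun q : (EuclideanSpace ℝ (Fin n) × EuclideanSpace ℝ (Fin n)) × ℝ =>
      radialKer ε (q.1.1 + q.2 • q.1.2 - x₀) q.1.2 * f (q.1.1 + q.2 • q.1.2) q.1.2 q.2 :=
    ((continuous_radialKer hε).comp (by fun_prop : Continuous fun q : (EuclideanSpace ℝ (Fin n) ×
      EuclideanSpace ℝ (Fin n)) × ℝ => (q.1.1 + q.2 • q.1.2 - x₀, q.1.2))).mul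
    (hf_cont.comp (by fun_prop : Continuous fun q : (EuclideanSpace ℝ (Fin n) ×
      EuclideanSpace ℝ (Fin n)) × ℝ => ((q.1.1 + q.2 • q.1.2, q.1.2), q.2)))
  have hline : ∀ᵐ p : EuclideanSpace ℝ (Fin n) × EuclideanSpace ℝ (Fin n),
      ∫ t in Icc (0:ℝ) T, radialKer ε (p.1 + t • p.2 - x₀) p.2 * f (p.1 + t • p.2) p.2 t
        = h p := by
    filter_upwards [hcG_int.prod_right_ae] with p hp
    have hG : IntegrableOn (fun s => g (p.1 + s • p.2) p.2 s) (Icc 0 T) := by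
      have h1 : (1 + ‖p.2‖ ^ 2) ≠ 0 := by positivity
      have := hp.const_mul (1 + ‖p.2‖ ^ 2)⁻¹
      simpa [IntegrableOn, inv_mul_cancel_left₀ h1] using this
    have hd : ∀ t : ℝ, HasDerivAt (fun t : ℝ => radial ε (p.1 + t • p.2 - x₀) p.2)
        (radialKer ε (p.1 + t • p.2 - x₀) p.2) t := fun t => by
      have := hasDerivAt_radial hε (p.1 - x₀) p.2 t
      simpa only [add_sub_right_comm] using this
    have hc : Continuous fun t : ℝ => radialKer ε (p.1 + t • p.2 - x₀) p.2 :=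
      (continuous_radialKer hε).comp (by fun_prop : Continuous fun t : ℝ =>
        (p.1 + t • p.2 - x₀, p.2))
    have := by_parts (F := fun t => f (p.1 + t • p.2) p.2 t) hT hd hc hG
      (fun t ht => by simpa using h_mild p.1 p.2 t ht)
    simpa [hh] using this
  have hnn : ∀ p : EuclideanSpace ℝ (Fin n) × EuclideanSpace ℝ (Fin n), ∀ t ∈ Icc (0:ℝ) T,
      0 ≤ radialKer ε (p.1 + t • p.2 - x₀) p.2 * f (p.1 + t • p.2) p.2 t := fun p t ht =>
    mul_nonneg (radialKer_nonneg _ _ _) (hf_nonneg _ _ _ ht.1)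
  have hh_nn : 0 ≤ᵐ[volume] h := by
    filter_upwards [hline] with p hp
    rw [← hp]
    exact setIntegral_nonneg measurableSet_Icc (hnn p)
  calc ∫⁻ t in Icc (0:ℝ) T, ∫⁻ p : EuclideanSpace ℝ (Fin n) × EuclideanSpace ℝ (Fin n),
        ENNReal.ofReal (radialKer ε (p.1 - x₀) p.2 * f p.1 p.2 t)
      = ∫⁻ t in Icc (0:ℝ) T, ∫⁻ p : EuclideanSpace ℝ (Fin n) × EuclideanSpace ℝ (Fin n),
        ENNReal.ofReal (radialKer ε (p.1 + t • p.2 - x₀) p.2 * f (p.1 + t • p.2) p.2 t) := by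
        refine lintegral_congr fun t => ?_
        have hm : Measurable fun p : EuclideanSpace ℝ (Fin n) × EuclideanSpace ℝ (Fin n) =>
            ENNReal.ofReal (radialKer ε (p.1 - x₀) p.2 * f p.1 p.2 t) :=
          ((((continuous_radialKer hε).comp (by fun_prop : Continuous fun p :
            EuclideanSpace ℝ (Fin n) × EuclideanSpace ℝ (Fin n) =>
              (p.1 - x₀, p.2))).measurable).mul (hft t)).ennreal_ofReal
        exact ((measurePreserving_transport t).lintegral_comp hm).symm
    _ = ∫⁻ p : EuclideanSpace ℝ (Fin n) × EuclideanSpace ℝ (Fin n), ∫⁻ t in Icc (0:ℝ) T,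
        ENNReal.ofReal (radialKer ε (p.1 + t • p.2 - x₀) p.2 * f (p.1 + t • p.2) p.2 t) :=
        lintegral_lintegral_swap
          (hker.measurable.comp measurable_swap).ennreal_ofReal.aemeasurable
    _ = ∫⁻ p, ENNReal.ofReal (h p) := by
        refine lintegral_congr_ae ?_
        filter_upwards [hline] with p hp
        rw [← hp, ofReal_integral_eq_lintegral_ofReal]
        · exact (hker.comp (by fun_prop : Continuous fun t : ℝ => (p, t))).integrableOn_Icc
        · exact (ae_restrict_iff' measurableSet_Icc).2 (Eventually.of_forall (hnn p))
    _ = ENNReal.ofReal (∫ p, h p) := (ofReal_integral_eq_lintegral_ofReal hh_int hh_nn).symm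
    _ ≤ _ := by
        apply ENNReal.ofReal_le_ofReal
        have h1 := abs_le.1 (hbd T hT)
        have h2 := abs_le.1 (hbd 0 le_rfl)
        rw [hcons] at h1
        rw [hh_eq]
        linarith [h1.2, h2.1]

/-! ### Removing the regularization -/

/-- The Morawetz kernel is bounded by the limit of its regularizations. At `y = 0` it has the
value `0`, by the convention on division by zero. -/
lemma kernel_le_liminf {n : ℕ} (y ξ : EuclideanSpace ℝ (Fin n)) (a : ℝ) :
    ENNReal.ofReal (((‖y‖ ^ 2 * ‖ξ‖ ^ 2 - ⟪y, ξ⟫ ^ 2) / ‖y‖ ^ 3) * a) ≤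
      liminf (fun N : ℕ => ENNReal.ofReal (radialKer (1 / ((N:ℝ) + 1)) y ξ * a)) atTop := by
  rcases eq_or_ne y 0 with rfl | hy
  · simp
  have hy' : 0 < ‖y‖ := norm_pos_iff.2 hy
  have hc : ContinuousAt (fun ε : ℝ => ENNReal.ofReal (radialKer ε y ξ * a)) 0 := by
    refine ENNReal.continuous_ofReal.continuousAt.comp (ContinuousAt.mul ?_ continuousAt_const)
    unfold radialKer
    refine ContinuousAt.div (by fun_prop) (by fun_prop) ?_
    exact (pow_pos (Real.sqrt_pos.2 (by positivity)) 3).ne'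
  have ht := hc.tendsto.comp (tendsto_one_div_add_atTop_nhds_zero_nat (𝕜 := ℝ))
  have := ht.liminf_eq
  simp only [Function.comp_def] at this
  rw [this]
  apply le_of_eq
  simp [radialKer, Real.sqrt_sq hy'.le, mul_comm]

lemma measurable_regularized {n : ℕ}
    (f : EuclideanSpace ℝ (Fin n) → EuclideanSpace ℝ (Fin n) → ℝ → ℝ)
    (hf_meas : Measurable fun p : (EuclideanSpace ℝ (Fin n) × EuclideanSpace ℝ (Fin n)) × ℝ =>
      f p.1.1 p.1.2 p.2) (x₀ : EuclideanSpace ℝ (Fin n)) (N : ℕ) :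
    Measurable fun q : ℝ × (EuclideanSpace ℝ (Fin n) × EuclideanSpace ℝ (Fin n)) =>
      ENNReal.ofReal (radialKer (1 / ((N:ℝ) + 1)) (q.2.1 - x₀) q.2.2 * f q.2.1 q.2.2 q.1) := by
  have hε : 0 < 1 / ((N:ℝ) + 1) := by positivity
  have h1 : Continuous fun q : ℝ × (EuclideanSpace ℝ (Fin n) × EuclideanSpace ℝ (Fin n)) =>
      (q.2.1 - x₀, q.2.2) := by fun_prop
  exact (((continuous_radialKer hε).comp h1).measurable.mul
    (hf_meas.comp measurable_swap)).ennreal_ofReal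

/-- Fatou's lemma in phase space at a fixed time, removing the regularization. -/
lemma slice_le_liminf {n : ℕ}
    (f : EuclideanSpace ℝ (Fin n) → EuclideanSpace ℝ (Fin n) → ℝ → ℝ)
    (hf_meas : Measurable fun p : (EuclideanSpace ℝ (Fin n) × EuclideanSpace ℝ (Fin n)) × ℝ =>
      f p.1.1 p.1.2 p.2) (x₀ : EuclideanSpace ℝ (Fin n)) (t : ℝ) :
    ∫⁻ p : EuclideanSpace ℝ (Fin n) × EuclideanSpace ℝ (Fin n),
        ENNReal.ofReal
          (((‖p.1 - x₀‖ ^ 2 * ‖p.2‖ ^ 2 - ⟪p.1 - x₀, p.2⟫ ^ 2) / ‖p.1 - x₀‖ ^ 3)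
            * f p.1 p.2 t) ≤
      liminf (fun N : ℕ => ∫⁻ p : EuclideanSpace ℝ (Fin n) × EuclideanSpace ℝ (Fin n),
        ENNReal.ofReal (radialKer (1 / ((N:ℝ) + 1)) (p.1 - x₀) p.2 * f p.1 p.2 t)) atTop := by
  have hm : ∀ N : ℕ, Measurable fun p : EuclideanSpace ℝ (Fin n) × EuclideanSpace ℝ (Fin n) =>
      ENNReal.ofReal (radialKer (1 / ((N:ℝ) + 1)) (p.1 - x₀) p.2 * f p.1 p.2 t) := by
    intro N
    have h1 : Measurable fun p : EuclideanSpace ℝ (Fin n) × EuclideanSpace ℝ (Fin n) =>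
      (t, p) := measurable_prodMk_left
    have h2 := (measurable_regularized f hf_meas x₀ N).comp h1
    simpa only [Function.comp_def] using h2
  refine le_trans (lintegral_mono fun p => ?_) (lintegral_liminf_le hm)
  exact kernel_le_liminf (p.1 - x₀) p.2 (f p.1 p.2 t)

/-- Morawetz-type estimate: for every observer `x₀` the space-time integral
`∫₀^∞ ∬ (1/|x−x₀|)|ξ|² sin²θ(x−x₀,ξ) f(x,ξ,t) dx dξ dt
  = ∫₀^∞ ∬ (|x−x₀|²|ξ|² − ⟪x−x₀,ξ⟫²)/|x−x₀|³ · f(x,ξ,t) dx dξ dt` is finite. -/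
theorem morawetz_estimate {n : ℕ} (hn : 1 ≤ n)
    (f g : EuclideanSpace ℝ (Fin n) → EuclideanSpace ℝ (Fin n) → ℝ → ℝ)
    (hf_nonneg : ∀ x ξ t, (0:ℝ) ≤ t → 0 ≤ f x ξ t)
    (hf_meas : Measurable fun p : (EuclideanSpace ℝ (Fin n) × EuclideanSpace ℝ (Fin n)) × ℝ =>
      f p.1.1 p.1.2 p.2)
    (hg_meas : Measurable fun p : (EuclideanSpace ℝ (Fin n) × EuclideanSpace ℝ (Fin n)) × ℝ =>
      g p.1.1 p.1.2 p.2)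
    -- mild solution along characteristics
    (h_mild : ∀ (x ξ : EuclideanSpace ℝ (Fin n)) (t : ℝ), 0 ≤ t →
      f (x + t • ξ) ξ t = f x ξ 0 + ∫ s in Icc (0:ℝ) t, g (x + s • ξ) ξ s)
    -- `g` is a mesoscopic interaction
    (hmeso_mass : ∀ (t : ℝ), 0 ≤ t → ∀ x, Integrable (fun ξ => g x ξ t) ∧ ∫ ξ, g x ξ t = 0)
    (hmeso_mom : ∀ (t : ℝ), 0 ≤ t → ∀ x, Integrable (fun ξ => g x ξ t • ξ) ∧
      ∫ ξ, g x ξ t • ξ = (0 : EuclideanSpace ℝ (Fin n)))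
    (hmeso_en : ∀ (t : ℝ), 0 ≤ t → ∀ x, Integrable (fun ξ => g x ξ t * ‖ξ‖ ^ 2) ∧
      ∫ ξ, g x ξ t * ‖ξ‖ ^ 2 = 0)
    -- finiteness of mass, energy and second moments at every time
    (hf_int : ∀ (t : ℝ), 0 ≤ t →
      Integrable (fun p : EuclideanSpace ℝ (Fin n) × EuclideanSpace ℝ (Fin n) =>
        f p.1 p.2 t * (1 + ‖p.1‖ ^ 2 + ‖p.2‖ ^ 2)))
    -- integrability of the interaction along characteristics with second moments
    (hg_char_int : ∀ T : ℝ, 0 < T →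
      Integrable (fun q : (EuclideanSpace ℝ (Fin n) × EuclideanSpace ℝ (Fin n)) × ℝ =>
        |g (q.1.1 + q.2 • q.1.2) q.1.2 q.2| * (1 + ‖q.1.1‖ ^ 2 + ‖q.1.2‖ ^ 2))
        ((volume : Measure (EuclideanSpace ℝ (Fin n) × EuclideanSpace ℝ (Fin n))).prod
          (volume.restrict (Icc (0:ℝ) T))))
    -- the total energy
    (Energy : ℝ)
    (hE : Energy = ∫ p : EuclideanSpace ℝ (Fin n) × EuclideanSpace ℝ (Fin n),
      f p.1 p.2 0 * ‖p.2‖ ^ 2)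
    -- `f` is smooth enough for the integration by parts in the spatial variable
    (hf_smooth : ContDiff ℝ 1 (fun p : (EuclideanSpace ℝ (Fin n) × EuclideanSpace ℝ (Fin n)) × ℝ =>
      f p.1.1 p.1.2 p.2))
    :
    ∀ x₀ : EuclideanSpace ℝ (Fin n),
      ∫⁻ t in Ioi (0:ℝ), ∫⁻ p : EuclideanSpace ℝ (Fin n) × EuclideanSpace ℝ (Fin n),
        ENNReal.ofReal
          (((‖p.1 - x₀‖ ^ 2 * ‖p.2‖ ^ 2 - ⟪p.1 - x₀, p.2⟫ ^ 2) / ‖p.1 - x₀‖ ^ 3)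
            * f p.1 p.2 t) < ⊤ := by
  intro x₀
  have hf_cont := hf_smooth.continuous
  set C : ℝ≥0∞ := ENNReal.ofReal (2 * ∫ p : EuclideanSpace ℝ (Fin n) ×
    EuclideanSpace ℝ (Fin n), (1 + ‖p.2‖ ^ 2) * f p.1 p.2 0)
  -- the regularized, time-truncated integrands of index `N`: `ε = 1/(N+1)`, `T = N+1`
  set A : ℕ → ℝ → ℝ≥0∞ := fun N => (Icc (0:ℝ) (N + 1)).indicator fun t =>
    ∫⁻ p : EuclideanSpace ℝ (Fin n) × EuclideanSpace ℝ (Fin n),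
      ENNReal.ofReal (radialKer (1 / ((N:ℝ) + 1)) (p.1 - x₀) p.2 * f p.1 p.2 t) with hA
  have hjoint := measurable_regularized f hf_meas x₀
  have hA_meas : ∀ N, Measurable (A N) := fun N =>
    (hjoint N).lintegral_prod_right'.indicator measurableSet_Icc
  have hA_le : ∀ N, ∫⁻ t in Ioi (0:ℝ), A N t ≤ C := fun N => by
    have hT : (0:ℝ) < N + 1 := by positivity
    refine (setLIntegral_le_lintegral _ _).trans ?_
    rw [hA, lintegral_indicator measurableSet_Icc]
    exact regularized_bound f g hf_nonneg hf_cont hg_meas h_mild hmeso_mass hmeso_mom hmeso_en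
      hf_int hT.le (hg_char_int _ hT) x₀ (by positivity)
  have hpt : ∀ t ∈ Ioi (0:ℝ), ∫⁻ p : EuclideanSpace ℝ (Fin n) × EuclideanSpace ℝ (Fin n),
        ENNReal.ofReal
          (((‖p.1 - x₀‖ ^ 2 * ‖p.2‖ ^ 2 - ⟪p.1 - x₀, p.2⟫ ^ 2) / ‖p.1 - x₀‖ ^ 3)
            * f p.1 p.2 t) ≤ liminf (fun N => A N t) atTop := by
    intro t ht
    have ht' : 0 < t := ht
    have hev : (fun N => A N t) =ᶠ[atTop] fun N : ℕ =>
        ∫⁻ p : EuclideanSpace ℝ (Fin n) × EuclideanSpace ℝ (Fin n),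
          ENNReal.ofReal (radialKer (1 / ((N:ℝ) + 1)) (p.1 - x₀) p.2 * f p.1 p.2 t) := by
      obtain ⟨N₀, hN₀⟩ := exists_nat_ge t
      filter_upwards [eventually_ge_atTop N₀] with N hN
      have hN' : (N₀:ℝ) ≤ N := by exact_mod_cast hN
      have hmem : t ∈ Icc (0:ℝ) (N + 1) := ⟨ht'.le, by linarith⟩
      simp only [hA, indicator_of_mem hmem]
    rw [liminf_congr hev]
    exact slice_le_liminf f hf_meas x₀ t
  calc _ ≤ ∫⁻ t in Ioi (0:ℝ), liminf (fun N => A N t) atTop :=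
        setLIntegral_mono' measurableSet_Ioi hpt
    _ ≤ liminf (fun N => ∫⁻ t in Ioi (0:ℝ), A N t) atTop := lintegral_liminf_le hA_meas
    _ ≤ liminf (fun _ : ℕ => C) atTop := liminf_le_liminf (Eventually.of_forall hA_le)
    _ = C := liminf_const C
    _ < ⊤ := ENNReal.ofReal_lt_top
end
end

section
/- (Three-observer covering lemma) Let n ≥ 2, R > 0, and let O₁, O₂, O₃ be three distinct points on the sphere {y ∈ ℝⁿ : |y| = R}. Then there exists c > 0 such that for every x in the open ball B(0,R) the three blind cones intersect trivially: C_{O₁}(x,c) ∩ C_{O₂}(x,c) ∩ C_{O₃}(x,c) = ∅. -/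
/-!
If a direction `ξ` lies in the blind cone of the observer `O` at `x`, then `O` is within
`2Rc` of the line `x + ℝξ` (`perp_le_of_mem_blindCone`). If it lies in all three cones, the three
observers are nearly collinear: the edges `a = O₂ - O₁` and `b = O₃ - O₁` have components
orthogonal to `ξ` of length at most `4Rc`, so their Gram determinant
`‖a‖²‖b‖² - ⟪a, b⟫²` is `O(c²)` (`gram_le`). But a line meets a sphere in at most two points, so
this determinant is a positive constant (`gram_pos`), which is impossible for small `c`.
-/

open MeasureTheory Real Filter Set InnerProductGeometry
open scoped RealInnerProductSpace ENNReal

noncomputable section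

/-- The blind cone at `x` with apex angle `c` relative to the observer `x₀`:
the set of nonzero velocities `ξ` whose angle with `x − x₀` lies outside `[c, π − c]`. -/
def blindCone {n : ℕ} (x₀ x : EuclideanSpace ℝ (Fin n)) (c : ℝ) :
    Set (EuclideanSpace ℝ (Fin n)) :=
  {ξ | ξ ≠ 0 ∧ angle (x - x₀) ξ ∉ Icc c (π - c)}

/-- Three distinct points `o`, `o + a`, `o + b` of a sphere are not collinear, so the edges `a`
and `b` satisfy the strict Cauchy–Schwarz inequality. -/
lemma gram_pos {n : ℕ} {R : ℝ} (o a b : EuclideanSpace ℝ (Fin n)) (ho : ‖o‖ = R)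
    (hoa : ‖o + a‖ = R) (hob : ‖o + b‖ = R) (ha : a ≠ 0) (hb : b ≠ 0) (hab : a ≠ b) :
    0 < ‖a‖ ^ 2 * ‖b‖ ^ 2 - ⟪a, b⟫ ^ 2 := by
  by_contra! hG
  have hA : 0 < ‖a‖ ^ 2 := by positivity
  have hzero : ‖(‖a‖ ^ 2) • b - ⟪a, b⟫ • a‖ ^ 2 = ‖a‖ ^ 2 * (‖a‖ ^ 2 * ‖b‖ ^ 2 - ⟪a, b⟫ ^ 2) := by
    rw [norm_sub_sq_real, norm_smul, norm_smul, inner_smul_left, inner_smul_right,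
      real_inner_comm a b, mul_pow, mul_pow, Real.norm_eq_abs, Real.norm_eq_abs, sq_abs, sq_abs]
    simp only [conj_trivial]
    ring
  have hv : (‖a‖ ^ 2) • b - ⟪a, b⟫ • a = 0 := by
    rw [← norm_eq_zero, ← sq_eq_zero_iff]
    refine le_antisymm ?_ (sq_nonneg _)
    rw [hzero]
    exact mul_nonpos_of_nonneg_of_nonpos hA.le hG
  obtain ⟨t, rfl⟩ : ∃ t : ℝ, b = t • a := by
    refine ⟨(‖a‖ ^ 2)⁻¹ * ⟪a, b⟫, ?_⟩
    rw [mul_smul, ← sub_eq_zero.mp hv, smul_smul, inv_mul_cancel₀ hA.ne', one_smul]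
  have e1 := norm_add_sq_real o a
  have e2 := norm_add_sq_real o (t • a)
  rw [norm_smul, inner_smul_right, mul_pow, Real.norm_eq_abs, sq_abs] at e2
  rw [hoa, ho] at e1
  rw [hob, ho] at e2
  have h : t * (t - 1) * ‖a‖ ^ 2 = 0 := by linear_combination t * e1 - e2
  rcases mul_eq_zero.mp h with h | h
  · rcases mul_eq_zero.mp h with h | h
    · exact hb (by simp [h])
    · exact hab (by rw [sub_eq_zero.mp h, one_smul])
  · exact hA.ne' h

/-- If `a` and `b` differ from multiples `p • ξ`, `q • ξ` of a unit vector by orthogonal vectors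
of length at most `δ`, then their Gram determinant is small. -/
lemma gram_le {n : ℕ} {M δ : ℝ} (a b ξ : EuclideanSpace ℝ (Fin n)) (hξ : ‖ξ‖ = 1)
    (ha : ‖a‖ ≤ M) (hb : ‖b‖ ≤ M)
    (hpa : ‖a - ⟪a, ξ⟫ • ξ‖ ≤ δ) (hpb : ‖b - ⟪b, ξ⟫ • ξ‖ ≤ δ) :
    ‖a‖ ^ 2 * ‖b‖ ^ 2 - ⟪a, b⟫ ^ 2 ≤ 4 * M ^ 2 * δ ^ 2 + δ ^ 4 := by
  have hp : |⟪a, ξ⟫| ≤ M := by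
    simpa [hξ] using (abs_real_inner_le_norm a ξ).trans (by simpa [hξ] using ha)
  have hq : |⟪b, ξ⟫| ≤ M := by
    simpa [hξ] using (abs_real_inner_le_norm b ξ).trans (by simpa [hξ] using hb)
  set p := ⟪a, ξ⟫ with hpdef
  set q := ⟪b, ξ⟫ with hqdef
  set a' := a - p • ξ with ha'
  set b' := b - q • ξ with hb'
  have hξξ : ⟪ξ, ξ⟫ = 1 := by rw [real_inner_self_eq_norm_sq, hξ, one_pow]
  have hξa : ⟪ξ, a⟫ = p := real_inner_comm _ _
  have hξb : ⟪ξ, b⟫ = q := real_inner_comm _ _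
  have eA : ‖a'‖ ^ 2 = ‖a‖ ^ 2 - p ^ 2 := by
    rw [← real_inner_self_eq_norm_sq, ← real_inner_self_eq_norm_sq a, ha']
    simp only [inner_sub_left, inner_sub_right, real_inner_smul_left, real_inner_smul_right,
      hξξ, hξa, ← hpdef]
    ring
  have eB : ‖b'‖ ^ 2 = ‖b‖ ^ 2 - q ^ 2 := by
    rw [← real_inner_self_eq_norm_sq, ← real_inner_self_eq_norm_sq b, hb']
    simp only [inner_sub_left, inner_sub_right, real_inner_smul_left, real_inner_smul_right,
      hξξ, hξb, ← hqdef]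
    ring
  have eAB : ⟪a', b'⟫ = ⟪a, b⟫ - p * q := by
    rw [ha', hb']
    simp only [inner_sub_left, inner_sub_right, real_inner_smul_left, real_inner_smul_right,
      hξξ, hξb, ← hpdef]
    ring
  have hM : 0 ≤ M := (norm_nonneg a).trans ha
  -- The Gram determinant is a square plus the Gram determinant of the orthogonal parts.
  have key : ‖a‖ ^ 2 * ‖b‖ ^ 2 - ⟪a, b⟫ ^ 2
      = ‖p • b' - q • a'‖ ^ 2 + (‖a'‖ ^ 2 * ‖b'‖ ^ 2 - ⟪a', b'⟫ ^ 2) := by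
    rw [norm_sub_sq_real, norm_smul, norm_smul, real_inner_smul_left, real_inner_smul_right,
      real_inner_comm a' b', mul_pow, mul_pow, Real.norm_eq_abs, Real.norm_eq_abs, sq_abs, sq_abs,
      eA, eB, eAB]
    ring
  have h1 : ‖p • b' - q • a'‖ ≤ 2 * M * δ := by
    refine (norm_sub_le _ _).trans ?_
    rw [norm_smul, norm_smul, Real.norm_eq_abs, Real.norm_eq_abs]
    have := mul_le_mul hp hpb (norm_nonneg _) hM
    have := mul_le_mul hq hpa (norm_nonneg _) hM
    linarith
  have h2 : ‖p • b' - q • a'‖ ^ 2 ≤ (2 * M * δ) ^ 2 := by gcongr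
  have h3 : ‖a'‖ ^ 2 * ‖b'‖ ^ 2 ≤ δ ^ 2 * δ ^ 2 := by gcongr
  rw [key]
  nlinarith [sq_nonneg ⟪a', b'⟫]

/-- For `ξ` in the blind cone of `o`, the distance from `o` to the line through `x` with unit
direction `ξ` is `‖x - o‖ sin θ ≤ ‖x - o‖ c`. -/
lemma perp_le_of_mem_blindCone {n : ℕ} {c : ℝ} (o x ξ : EuclideanSpace ℝ (Fin n))
    (hξ : ‖ξ‖ = 1) (h : ξ ∈ blindCone o x c) :
    ‖(x - o) - ⟪x - o, ξ⟫ • ξ‖ ≤ ‖x - o‖ * c := by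
  have hang := h.2
  set u := x - o
  have h0 := angle_nonneg u ξ
  have hpi := angle_le_pi u ξ
  have hsin0 : 0 ≤ sin (angle u ξ) := sin_nonneg_of_nonneg_of_le_pi h0 hpi
  have hsin : sin (angle u ξ) ≤ c := by
    rw [mem_Icc, not_and_or, not_le, not_le] at hang
    rcases hang with hlt | hlt
    · exact (sin_le h0).trans hlt.le
    · rw [← sin_pi_sub]
      exact (sin_le (by linarith)).trans (by linarith)
  have hcos : ⟪u, ξ⟫ = cos (angle u ξ) * ‖u‖ := by
    have := cos_angle_mul_norm_mul_norm u ξ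
    rw [hξ, mul_one] at this
    exact this.symm
  have hsq : ‖u - ⟪u, ξ⟫ • ξ‖ ^ 2 = (‖u‖ * sin (angle u ξ)) ^ 2 := by
    rw [norm_sub_sq_real, norm_smul, real_inner_smul_right, hξ, mul_one, Real.norm_eq_abs, sq_abs,
      mul_pow, sin_sq, hcos]
    ring
  have heq : ‖u - ⟪u, ξ⟫ • ξ‖ = ‖u‖ * sin (angle u ξ) :=
    (sq_eq_sq₀ (norm_nonneg _) (by positivity)).mp hsq
  rw [heq]
  gcongr

lemma normalize_mem_blindCone {n : ℕ} {c : ℝ} {o x ξ : EuclideanSpace ℝ (Fin n)}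
    (h : ξ ∈ blindCone o x c) : (‖ξ‖⁻¹ • ξ) ∈ blindCone o x c := by
  have hpos : 0 < ‖ξ‖⁻¹ := inv_pos.mpr (norm_pos_iff.mpr h.1)
  refine ⟨smul_ne_zero hpos.ne' h.1, ?_⟩
  rw [angle_smul_right_of_pos _ _ hpos]
  exact h.2

/-- If the blind cones of two observers both contain `ξ`, the edge between the observers is nearly
parallel to `ξ`: both of them are close to the line `x + ℝξ`. -/
lemma perp_edge_le {n : ℕ} {R c : ℝ} (hc : 0 < c) (o o' x ξ : EuclideanSpace ℝ (Fin n))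
    (hξ : ‖ξ‖ = 1) (ho : ‖o‖ = R) (ho' : ‖o'‖ = R) (hx : ‖x‖ < R)
    (h : ξ ∈ blindCone o x c) (h' : ξ ∈ blindCone o' x c) :
    ‖(o' - o) - ⟪o' - o, ξ⟫ • ξ‖ ≤ 4 * R * c := by
  have e : (o' - o) - ⟪o' - o, ξ⟫ • ξ
      = ((x - o) - ⟪x - o, ξ⟫ • ξ) - ((x - o') - ⟪x - o', ξ⟫ • ξ) := by
    simp only [inner_sub_left, sub_smul]
    abel
  have b1 := perp_le_of_mem_blindCone o x ξ hξ h
  have b2 := perp_le_of_mem_blindCone o' x ξ hξ h'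
  have n1 : ‖x - o‖ ≤ 2 * R := (norm_sub_le _ _).trans (by linarith)
  have n2 : ‖x - o'‖ ≤ 2 * R := (norm_sub_le _ _).trans (by linarith)
  have m1 := mul_le_mul_of_nonneg_right n1 hc.le
  have m2 := mul_le_mul_of_nonneg_right n2 hc.le
  rw [e]
  refine (norm_sub_le _ _).trans ?_
  linarith

/-- Three-observer covering lemma: for `n ≥ 2`, `R > 0` and three distinct
observers `O₁, O₂, O₃` on the sphere of radius `R`, there is an apex angle `c > 0` such that for
every `x` in the open ball `B(0,R)` the three blind cones intersect trivially. -/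
theorem three_observer_covering {n : ℕ} (hn : 2 ≤ n) (R : ℝ) (hR : 0 < R)
    (O₁ O₂ O₃ : EuclideanSpace ℝ (Fin n))
    (hO₁ : ‖O₁‖ = R) (hO₂ : ‖O₂‖ = R) (hO₃ : ‖O₃‖ = R)
    (h₁₂ : O₁ ≠ O₂) (h₁₃ : O₁ ≠ O₃) (h₂₃ : O₂ ≠ O₃) :
    ∃ c : ℝ, 0 < c ∧ ∀ x : EuclideanSpace ℝ (Fin n), ‖x‖ < R →
      blindCone O₁ x c ∩ blindCone O₂ x c ∩ blindCone O₃ x c = ∅ := by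
  have hG := gram_pos O₁ (O₂ - O₁) (O₃ - O₁) hO₁ (by simpa using hO₂) (by simpa using hO₃)
    (sub_ne_zero.mpr h₁₂.symm) (sub_ne_zero.mpr h₁₃.symm) (fun h => h₂₃ (sub_left_injective h))
  set G := ‖O₂ - O₁‖ ^ 2 * ‖O₃ - O₁‖ ^ 2 - ⟪O₂ - O₁, O₃ - O₁⟫ ^ 2 with hGdef
  -- For `c ≤ 1`, `gram_le` with `M = 2R` and `δ = 4Rc` gives `G ≤ 512 R⁴ c²`; the second
  -- argument of the minimum makes the right-hand side at most `G / 2`.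
  refine ⟨min 1 (√G / (32 * R ^ 2)), by positivity, fun x hx => ?_⟩
  set c := min 1 (√G / (32 * R ^ 2)) with hcdef
  have hc : 0 < c := by positivity
  have hc1 : c ≤ 1 := min_le_left _ _
  have hc2 : c ≤ √G / (32 * R ^ 2) := min_le_right _ _
  rw [Set.eq_empty_iff_forall_notMem]
  rintro ξ₀ ⟨⟨m1, m2⟩, m3⟩
  have hξ : ‖‖ξ₀‖⁻¹ • ξ₀‖ = 1 := norm_smul_inv_norm (𝕜 := ℝ) m1.1
  replace m1 := normalize_mem_blindCone m1
  replace m2 := normalize_mem_blindCone m2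
  replace m3 := normalize_mem_blindCone m3
  have hle := gram_le (M := 2 * R) (δ := 4 * R * c) (O₂ - O₁) (O₃ - O₁) _ hξ
    ((norm_sub_le _ _).trans (by linarith)) ((norm_sub_le _ _).trans (by linarith))
    (perp_edge_le hc _ _ x _ hξ hO₁ hO₂ hx m1 m2)
    (perp_edge_le hc _ _ x _ hξ hO₁ hO₃ hx m1 m3)
  rw [← hGdef] at hle
  have hsq : (c * (32 * R ^ 2)) ^ 2 ≤ G := by
    rw [← Real.sq_sqrt hG.le]
    have := (le_div_iff₀ (by positivity)).mp hc2
    gcongr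
  have hc4 : R ^ 4 * c ^ 2 * c ^ 2 ≤ R ^ 4 * c ^ 2 * 1 := by
    gcongr
    exact pow_le_one₀ hc.le hc1
  nlinarith
end
end
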